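/- The satisfiability problem and the finite satisfiability problem for the intersection of the fluted fragment with equality and the two-variable guarded fragment are undecidable in the presence of two distinguished transitive relations; the same problems are undecidable in the presence of one distinguished transitive relation and one distinguished equivalence relation. -/

import Mathlib

/- STATEMENT 18: (Finite) satisfiability of sentences in the intersection of the
fluted fragment with equality and the two-variable guarded fragment is undecidable
with two transitive relations, and with one transitive and one equivalence
relation. -/

namespace FlutedTwoTransEq

/-- FL²-formulas with equality over countably many unary predicates (indexed by `ℕ`)
and two distinguished binary predicates (indexed by `Fin 2`); the index `m ≤ 2` records
that the free variables form a suffix of `x₁, …, x_m`, all atoms ending at the last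
variable, and only the last variable may be quantified. -/
inductive F : ℕ → Type
  | patom (p : ℕ) {m : ℕ} (h1 : 1 ≤ m) (h2 : m ≤ 2) : F m
  | batom (k : Fin 2) : F 2
  | eqatom : F 2
  | fls {m : ℕ} (h : m ≤ 2) : F m
  | not {m : ℕ} (φ : F m) : F m
  | and {m : ℕ} (φ ψ : F m) : F m
  | or {m : ℕ} (φ ψ : F m) : F m
  | imp {m : ℕ} (φ ψ : F m) : F m
  | ex {m : ℕ} (h : m ≤ 1) (φ : F (m + 1)) : F m
  | all {m : ℕ} (h : m ≤ 1) (φ : F (m + 1)) : F m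

/-- A structure interpreting the unary predicates and the two distinguished binary
predicates. -/
structure Str (A : Type) where
  U : ℕ → A → Prop
  T : Fin 2 → A → A → Prop

def Sat {A : Type} (M : Str A) : ∀ {m : ℕ}, F m → (Fin m → A) → Prop
  | m, .patom p h1 _, v => M.U p (v ⟨m - 1, by omega⟩)
  | _, .batom k, v => M.T k (v 0) (v 1)
  | _, .eqatom, v => v 0 = v 1
  | _, .fls _, _ => False
  | _, .not φ, v => ¬ Sat M φ v
  | _, .and φ ψ, v => Sat M φ v ∧ Sat M ψ v
  | _, .or φ ψ, v => Sat M φ v ∨ Sat M ψ v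
  | _, .imp φ ψ, v => Sat M φ v → Sat M ψ v
  | _, .ex _ φ, v => ∃ a : A, Sat M φ (Fin.snoc v a)
  | _, .all _ φ, v => ∀ a : A, Sat M φ (Fin.snoc v a)

/-- `φ` has a model in which both distinguished binary relations are transitive. -/
def Satisfiable (φ : F 0) : Prop :=
  ∃ (A : Type) (_ : Nonempty A) (M : Str A),
    (∀ k, Transitive (M.T k)) ∧ Sat M φ (fun i => i.elim0)

/-- `φ` has a finite model in which both distinguished binary relations are
transitive. -/
def FinitelySatisfiable (φ : F 0) : Prop :=
  ∃ (A : Type) (_ : Nonempty A) (_ : Finite A) (M : Str A),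
    (∀ k, Transitive (M.T k)) ∧ Sat M φ (fun i => i.elim0)

/-- A concrete Gödel numbering of FL²-formulas with equality. -/
def encode : ∀ {m : ℕ}, F m → ℕ
  | _, .patom p _ _ => Nat.pair 0 p
  | _, .batom k => Nat.pair 1 k.val
  | _, .eqatom => Nat.pair 2 0
  | _, .fls _ => Nat.pair 3 0
  | _, .not φ => Nat.pair 4 (encode φ)
  | _, .and φ ψ => Nat.pair 5 (Nat.pair (encode φ) (encode ψ))
  | _, .or φ ψ => Nat.pair 6 (Nat.pair (encode φ) (encode ψ))
  | _, .imp φ ψ => Nat.pair 7 (Nat.pair (encode φ) (encode ψ))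
  | _, .ex _ φ => Nat.pair 8 (encode φ)
  | _, .all _ φ => Nat.pair 9 (encode φ)

/-- The variable `x₁` occurs (free) in a formula with free variables among
`x₁, x₂`.  (Formulas of index 2 are quantifier-free.) -/
def UsesVar1 : F 2 → Prop
  | .batom _ => True
  | .eqatom => True
  | .not φ => UsesVar1 φ
  | .and φ ψ => UsesVar1 φ ∨ UsesVar1 ψ
  | .or φ ψ => UsesVar1 φ ∨ UsesVar1 ψ
  | .imp φ ψ => UsesVar1 φ ∨ UsesVar1 ψ
  | _ => False

/-- Atomic formulas with free variable `x₁`. -/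
def IsAtom1 (φ : F 1) : Prop :=
  ∃ p h1 h2, φ = F.patom p h1 h2

/-- Atomic formulas with free variables among `x₁, x₂` (including equality atoms). -/
def IsAtom2 (φ : F 2) : Prop :=
  (∃ p h1 h2, φ = F.patom p h1 h2) ∨ (∃ k, φ = F.batom k) ∨ φ = F.eqatom

/-- Atomic formulas featuring the variable `x₁`. -/
def IsBatom (φ : F 2) : Prop :=
  (∃ k, φ = F.batom k) ∨ φ = F.eqatom

/-- Membership in the guarded fragment GF²: all quantification is of the form
`∃x₂(α ∧ ψ)` or `∀x₂(α → ψ)` (resp. `∃x₁(α ∧ ψ)`, `∀x₁(α → ψ)`) where `α` is an atom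
featuring all free variables of `ψ` (in particular the quantified variable). -/
inductive Guarded : ∀ {m : ℕ}, F m → Prop
  | patom {m : ℕ} (p : ℕ) (h1 : 1 ≤ m) (h2 : m ≤ 2) : Guarded (F.patom p h1 h2)
  | batom (k : Fin 2) : Guarded (F.batom k)
  | eqatom : Guarded F.eqatom
  | fls {m : ℕ} (h : m ≤ 2) : Guarded (F.fls h)
  | not {m : ℕ} {φ : F m} : Guarded φ → Guarded (F.not φ)
  | and {m : ℕ} {φ ψ : F m} : Guarded φ → Guarded ψ → Guarded (F.and φ ψ)
  | or {m : ℕ} {φ ψ : F m} : Guarded φ → Guarded ψ → Guarded (F.or φ ψ)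
  | imp {m : ℕ} {φ ψ : F m} : Guarded φ → Guarded ψ → Guarded (F.imp φ ψ)
  | ex0 {h : 0 ≤ 1} {α χ : F 1} : IsAtom1 α → Guarded χ →
      Guarded (F.ex h (F.and α χ))
  | all0 {h : 0 ≤ 1} {α χ : F 1} : IsAtom1 α → Guarded χ →
      Guarded (F.all h (F.imp α χ))
  | ex1 {h : 1 ≤ 1} {α χ : F 2} : IsAtom2 α → Guarded χ →
      (UsesVar1 χ → IsBatom α) → Guarded (F.ex h (F.and α χ))
  | all1 {h : 1 ≤ 1} {α χ : F 2} : IsAtom2 α → Guarded χ →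
      (UsesVar1 χ → IsBatom α) → Guarded (F.all h (F.imp α χ))

/-- `φ` has a model in which `T 0` is transitive and `T 1` is an equivalence
relation. -/
def SatisfiableTransEquiv (φ : F 0) : Prop :=
  ∃ (A : Type) (_ : Nonempty A) (M : Str A),
    Transitive (M.T 0) ∧ Equivalence (M.T 1) ∧ Sat M φ (fun i => i.elim0)

/-- `φ` has a finite model in which `T 0` is transitive and `T 1` is an equivalence
relation. -/
def FinitelySatisfiableTransEquiv (φ : F 0) : Prop :=
  ∃ (A : Type) (_ : Nonempty A) (_ : Finite A) (M : Str A),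
    Transitive (M.T 0) ∧ Equivalence (M.T 1) ∧ Sat M φ (fun i => i.elim0)


inductive Instr (L : Type) : Type
  | inc (c : Bool) (l : L)
  | dec (c : Bool) (l0 l1 : L)
  | nop (l : L)
  | acc
  | rej

def Instr.map {L L' : Type} (f : L → L') : Instr L → Instr L'
  | .inc c l => .inc c (f l)
  | .dec c l0 l1 => .dec c (f l0) (f l1)
  | .nop l => .nop (f l)
  | .acc => .acc
  | .rej => .rej

/-- Two-counter machine steps; `false` is the first counter, `true` the second one. -/
inductive Step {L : Type} (I : L → Instr L) : L × ℕ × ℕ → L × ℕ × ℕ → Prop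
  | incx {l l' x y} : I l = .inc false l' → Step I (l, x, y) (l', x + 1, y)
  | incy {l l' x y} : I l = .inc true l' → Step I (l, x, y) (l', x, y + 1)
  | decx0 {l l0 l1 y} : I l = .dec false l0 l1 → Step I (l, 0, y) (l0, 0, y)
  | decx1 {l l0 l1 x y} : I l = .dec false l0 l1 → Step I (l, x + 1, y) (l1, x, y)
  | decy0 {l l0 l1 x} : I l = .dec true l0 l1 → Step I (l, x, 0) (l0, x, 0)
  | decy1 {l l0 l1 x y} : I l = .dec true l0 l1 → Step I (l, x, y + 1) (l1, x, y)
  | nop {l l' x y} : I l = .nop l' → Step I (l, x, y) (l', x, y)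

abbrev Reaches {L : Type} (I : L → Instr L) := Relation.ReflTransGen (Step I)

theorem Step.det {L : Type} {I : L → Instr L} {a b c} (h : Step I a b) (h' : Step I a c) : b = c := by
  cases h <;> cases h' <;> simp_all

/-- Along a halting accepting run everything is bounded and the rejecting state is not met. -/
theorem bounded_of_acc {L : Type} {I : L → Instr L} {a b : L × ℕ × ℕ} (h : Reaches I a b)
    (hb : I b.1 = .acc) :
    ∃ B, ∀ c, Reaches I a c → c.2.1 ≤ B ∧ c.2.2 ≤ B ∧ I c.1 ≠ .rej := by
  induction h using Relation.ReflTransGen.head_induction_on with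
  | refl =>
    refine ⟨max b.2.1 b.2.2, fun c hc => ?_⟩
    have : c = b := by
      rcases Relation.ReflTransGen.cases_head hc with h | ⟨d, h, -⟩
      · exact h.symm
      · cases h <;> simp_all
    subst this
    simp [hb]
  | head h1 h2 ih =>
    rename_i a' c'
    obtain ⟨B, hB⟩ := ih
    refine ⟨max B (max a'.2.1 a'.2.2), fun c hc => ?_⟩
    rcases Relation.ReflTransGen.cases_head hc with h | ⟨d, h, hd⟩
    · subst h
      refine ⟨by simp, by simp, ?_⟩
      intro hr
      cases h1 <;> simp_all
    · rw [h.det h1] at hd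
      obtain ⟨h1, h2, h3⟩ := hB c hd
      exact ⟨le_max_of_le_left h1, le_max_of_le_left h2, h3⟩

theorem Step.map {L L' : Type} {I : L → Instr L} {I' : L' → Instr L'} (f : L → L')
    (hf : ∀ l, I l = .acc ∨ I' (f l) = (I l).map f) {a b : L × ℕ × ℕ} (h : Step I a b) :
    Step I' (f a.1, a.2) (f b.1, b.2) := by
  cases h with
  | incx h => rename_i l _ _ _; have := hf l; simp [h, Instr.map] at this; exact .incx this
  | incy h => rename_i l _ _ _; have := hf l; simp [h, Instr.map] at this; exact .incy this
  | decx0 h => rename_i l _ _ _; have := hf l; simp [h, Instr.map] at this; exact .decx0 this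
  | decx1 h => rename_i l _ _ _ _; have := hf l; simp [h, Instr.map] at this; exact .decx1 this
  | decy0 h => rename_i l _ _ _; have := hf l; simp [h, Instr.map] at this; exact .decy0 this
  | decy1 h => rename_i l _ _ _ _; have := hf l; simp [h, Instr.map] at this; exact .decy1 this
  | nop h => rename_i l _ _ _; have := hf l; simp [h, Instr.map] at this; exact .nop this

theorem Reaches.map {L L' : Type} {I : L → Instr L} {I' : L' → Instr L'} (f : L → L')
    (hf : ∀ l, I l = .acc ∨ I' (f l) = (I l).map f) {a b : L × ℕ × ℕ} (h : Reaches I a b) :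
    Reaches I' (f a.1, a.2) (f b.1, b.2) := by
  induction h with
  | refl => exact .refl
  | tail _ h ih => exact ih.tail (h.map f hf)

structure Block where
  L : Type
  fin : Finite L
  I : L → Instr L
  start : L
  exit : L
  hexit : I exit = .acc

def Block.Does (B : Block) (a b : ℕ × ℕ) : Prop := Reaches B.I (B.start, a) (B.exit, b)

def bSkip : Block := ⟨Unit, inferInstance, fun _ => .acc, (), (), rfl⟩
def bRej : Block := ⟨Bool, inferInstance, fun b => if b then .acc else .rej, false, true, rfl⟩
def bInc (c : Bool) : Block :=
  ⟨Bool, inferInstance, fun b => if b then .acc else .inc c true, false, true, rfl⟩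
def bDec (c : Bool) : Block :=
  ⟨Bool, inferInstance, fun b => if b then .acc else .dec c true true, false, true, rfl⟩

open Classical in
noncomputable def bSeq (P Q : Block) : Block where
  L := P.L ⊕ Q.L
  fin := by have := P.fin; have := Q.fin; infer_instance
  I := fun l => match l with
    | .inl l => if l = P.exit then .nop (.inr Q.start) else (P.I l).map .inl
    | .inr l => (Q.I l).map .inr
  start := .inl P.start
  exit := .inr Q.exit
  hexit := by simp [Q.hexit, Instr.map]

open Classical in
/-- `inl false` is the test, `inl true` the exit. -/
noncomputable def bWhile (c : Bool) (P : Block) : Block where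
  L := Bool ⊕ P.L
  fin := by have := P.fin; infer_instance
  I := fun l => match l with
    | .inl false => .dec c (.inl true) (.inr P.start)
    | .inl true => .acc
    | .inr l => if l = P.exit then .nop (.inl false) else (P.I l).map .inr
  start := .inl false
  exit := .inl true
  hexit := rfl

open Classical in
/-- Test divisibility of the first counter by `p + 1`, moving it to the second counter;
then run `Y` and repeat, or run `N` and exit. -/
noncomputable def bTest (p : ℕ) (Y N : Block) : Block where
  L := (Fin (p + 1) × Bool) ⊕ (Y.L ⊕ N.L)
  fin := by have := Y.fin; have := N.fin; infer_instance
  I := fun l => match l with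
    | .inl (i, false) =>
        .dec false (if i = 0 then .inr (.inl Y.start) else .inr (.inr N.start)) (.inl (i, true))
    | .inl (i, true) => .inc true (.inl (i + 1, false))
    | .inr (.inl l) => if l = Y.exit then .nop (.inl (0, false)) else (Y.I l).map (.inr ∘ .inl)
    | .inr (.inr l) => (N.I l).map (.inr ∘ .inr)
  start := .inl (0, false)
  exit := .inr (.inr N.exit)
  hexit := by simp [N.hexit, Instr.map]

theorem bSkip_does (a) : bSkip.Does a a := .refl

theorem bIncx_does (x y) : (bInc false).Does (x, y) (x + 1, y) :=
  .single (.incx (by simp [bInc]))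
theorem bIncy_does (x y) : (bInc true).Does (x, y) (x, y + 1) :=
  .single (.incy (by simp [bInc]))
theorem bDecy_does (x y) : (bDec true).Does (x, y + 1) (x, y) :=
  .single (.decy1 (l0 := true) (by simp [bDec]))

theorem bSeq_left {P Q : Block} {a b} (h1 : P.Does a b) :
    Reaches (bSeq P Q).I ((bSeq P Q).start, a) (.inr Q.start, b) := by
  have h1' := Reaches.map (I' := (bSeq P Q).I) (Sum.inl) (fun l => by
    by_cases h : l = P.exit
    · left; rw [h, P.hexit]
    · right; simp [bSeq, h]) h1
  exact h1'.tail (.nop (by simp [bSeq]))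

theorem bSeq_right {P Q : Block} {l l' a b} (h1 : Reaches Q.I (l, a) (l', b)) :
    Reaches (bSeq P Q).I (.inr l, a) (.inr l', b) :=
  Reaches.map (I' := (bSeq P Q).I) (Sum.inr) (fun l => by right; simp [bSeq]) h1

theorem bSeq_does {P Q : Block} {a b c} (h1 : P.Does a b) (h2 : Q.Does b c) :
    (bSeq P Q).Does a c :=
  (bSeq_left h1).trans (bSeq_right h2)

theorem bWhile_body {c : Bool} {P : Block} {a b} (h1 : P.Does a b) :
    Reaches (bWhile c P).I (.inr P.start, a) (.inl false, b) := by
  have h1' := Reaches.map (I' := (bWhile c P).I) (Sum.inr) (fun l => by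
    by_cases h : l = P.exit
    · left; rw [h, P.hexit]
    · right; simp [bWhile, h]) h1
  exact h1'.tail (.nop (by simp [bWhile]))

theorem bWhilex_zero {P : Block} (y) : (bWhile false P).Does (0, y) (0, y) :=
  .single (.decx0 (l1 := .inr P.start) rfl)
theorem bWhiley_zero {P : Block} (x) : (bWhile true P).Does (x, 0) (x, 0) :=
  .single (.decy0 (l1 := .inr P.start) rfl)
theorem bWhilex_succ {P : Block} {x y b c} (h1 : P.Does (x, y) b) (h2 : (bWhile false P).Does b c) :
    (bWhile false P).Does (x + 1, y) c :=
  .trans (.trans (.single (.decx1 (l0 := .inl true) rfl)) (bWhile_body h1)) h2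
theorem bWhiley_succ {P : Block} {x y b c} (h1 : P.Does (x, y) b) (h2 : (bWhile true P).Does b c) :
    (bWhile true P).Does (x, y + 1) c :=
  .trans (.trans (.single (.decy1 (l0 := .inl true) rfl)) (bWhile_body h1)) h2

noncomputable def bRep (B : Block) : ℕ → Block
  | 0 => bSkip
  | k + 1 => bSeq B (bRep B k)

theorem bRep_incx (k x y) : (bRep (bInc false) k).Does (x, y) (x + k, y) := by
  induction k generalizing x with
  | zero => exact bSkip_does _
  | succ k ih => 
    have := bSeq_does (bIncx_does x y) (ih (x + 1))
    rwa [show x + 1 + k = x + (k + 1) by ring] at this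
theorem bRep_incy (k x y) : (bRep (bInc true) k).Does (x, y) (x, y + k) := by
  induction k generalizing y with
  | zero => exact bSkip_does _
  | succ k ih => 
    have := bSeq_does (bIncy_does x y) (ih (y + 1))
    rwa [show y + 1 + k = y + (k + 1) by ring] at this
theorem bRep_decy (k x y) : (bRep (bDec true) k).Does (x, y + k) (x, y) := by
  induction k generalizing y with
  | zero => exact bSkip_does _
  | succ k ih => exact bSeq_does (bDecy_does x (y + k)) (ih y)

/-- move the second counter to the first one -/
noncomputable def bBack : Block := bWhile true (bInc false)
theorem bBack_does (x y) : bBack.Does (x, y) (x + y, 0) := by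
  induction y generalizing x with
  | zero => exact bWhiley_zero _
  | succ y ih => 
    have := bWhiley_succ (bIncx_does x y) (ih (x + 1))
    rwa [show x + 1 + y = x + (y + 1) by ring] at this

/-- multiply by `p` -/
noncomputable def bMul (p : ℕ) : Block := bSeq (bWhile false (bRep (bInc true) p)) bBack
theorem bMul_aux (p x y) : (bWhile false (bRep (bInc true) p)).Does (x, y) (0, y + p * x) := by
  induction x generalizing y with
  | zero => exact bWhilex_zero _
  | succ x ih => 
    have := bWhilex_succ (bRep_incy p x y) (ih (y + p))
    rwa [show y + p + p * x = y + p * (x + 1) by ring] at this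
theorem bMul_does (p x) : (bMul p).Does (x, 0) (p * x, 0) := by
  have := bSeq_does (bMul_aux p x 0) (bBack_does _ _)
  simp only [zero_add] at this
  exact this

/-- divide the second counter by `p + 1`, into the first one -/
noncomputable def bDiv (p : ℕ) : Block := bWhile true (bSeq (bRep (bDec true) p) (bInc false))
theorem bDiv_does (p x y) : (bDiv p).Does (x, (p + 1) * y) (x + y, 0) := by
  induction y generalizing x with
  | zero => exact bWhiley_zero _
  | succ y ih => 
    have := bWhiley_succ (bSeq_does (bRep_decy p x ((p + 1) * y)) (bIncx_does _ _)) (ih (x + 1))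
    rwa [show x + 1 + y = x + (y + 1) by ring,
      show (p + 1) * y + p + 1 = (p + 1) * (y + 1) by ring] at this

theorem bTest_scan (p : ℕ) (Y N : Block) (x y : ℕ) (i : Fin (p + 1)) :
    Reaches (bTest p Y N).I (.inl (i, false), x, y) 
      (.inl (i + Fin.ofNat (p + 1) x, false), 0, y + x) := by
  induction x generalizing y i with
  | zero => simp; exact .refl
  | succ x ih =>
    have h1 : Step (bTest p Y N).I (.inl (i, false), x + 1, y) (.inl (i, true), x, y) :=
      .decx1 (l0 := if i = 0 then .inr (.inl Y.start) else .inr (.inr N.start)) rfl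
    have h2 : Step (bTest p Y N).I (.inl (i, true), x, y) (.inl (i + 1, false), x, y + 1) :=
      .incy rfl
    have h3 := ih (y + 1) (i + 1)
    have e : i + 1 + Fin.ofNat (p + 1) x = i + Fin.ofNat (p + 1) (x + 1) := by
      have : Fin.ofNat (p + 1) (x + 1) = 1 + Fin.ofNat (p + 1) x := by
        ext; simp [Fin.val_add, add_comm]
      rw [this, add_assoc]
    rw [e, show y + 1 + x = y + (x + 1) by ring] at h3
    exact .head h1 (.head h2 h3)

theorem bTest_yes (p : ℕ) (Y N : Block) (x : ℕ) (h : p + 1 ∣ x) :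
    Reaches (bTest p Y N).I ((bTest p Y N).start, x, 0) (.inr (.inl Y.start), 0, x) := by
  have h1 := bTest_scan p Y N x 0 0
  have e : Fin.ofNat (p + 1) x = 0 := by ext; simpa using Nat.mod_eq_zero_of_dvd h
  simp only [zero_add, e] at h1
  refine h1.tail (.decx0 (l1 := .inl (0, true)) ?_)
  simp [bTest]

theorem bTest_no (p : ℕ) (Y N : Block) (x : ℕ) (h : ¬ p + 1 ∣ x) :
    Reaches (bTest p Y N).I ((bTest p Y N).start, x, 0) (.inr (.inr N.start), 0, x) := by
  have h1 := bTest_scan p Y N x 0 0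
  have e : Fin.ofNat (p + 1) x ≠ 0 := by
    intro h'; apply h; have := congrArg Fin.val h'; simpa using Nat.dvd_of_mod_eq_zero (by simpa using this)
  simp only [zero_add] at h1
  refine h1.tail (.decx0 (l1 := .inl (Fin.ofNat (p + 1) x, true)) ?_)
  simpa [bTest] using h

theorem bTest_does_no (p : ℕ) (Y N : Block) (x : ℕ) (h : ¬ p + 1 ∣ x) {b} (h2 : N.Does (0, x) b) :
    (bTest p Y N).Does (x, 0) b := 
  (bTest_no p Y N x h).trans (Reaches.map (I' := (bTest p Y N).I) (Sum.inr ∘ Sum.inr)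
    (fun l => by right; simp [bTest]) h2)

theorem bTest_does_yes (p : ℕ) (Y N : Block) (x : ℕ) (h : p + 1 ∣ x) {b c}
    (h2 : Y.Does (0, x) b) (h3 : (bTest p Y N).Does b c) :
    (bTest p Y N).Does (x, 0) c := by
  refine (bTest_yes p Y N x h).trans ?_
  have h1' := Reaches.map (I' := (bTest p Y N).I) (Sum.inr ∘ Sum.inl) (fun l => by
    by_cases h : l = Y.exit
    · left; rw [h, Y.hexit]
    · right; simp [bTest, h]) h2
  exact (h1'.tail (.nop (by simp [bTest]))).trans h3

/-- Structured register programs. -/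
inductive Prog : Type
  | inc (r : ℕ)
  | seq (P Q : Prog)
  | loop (r : ℕ) (P : Prog)

inductive Run : Prog → (ℕ → ℕ) → (ℕ → ℕ) → Prop
  | inc {r s} : Run (.inc r) s (Function.update s r (s r + 1))
  | seq {P Q s s' s''} : Run P s s' → Run Q s' s'' → Run (.seq P Q) s s''
  | loop0 {r P s} : s r = 0 → Run (.loop r P) s s
  | loop1 {r P s k s' s''} : s r = k + 1 → Run P (Function.update s r k) s' → 
      Run (.loop r P) s' s'' → Run (.loop r P) s s''

def Prog.bd : Prog → ℕ
  | .inc r => r + 1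
  | .seq P Q => max P.bd Q.bd
  | .loop r P => max (r + 1) P.bd

noncomputable def pr (r : ℕ) : ℕ := Nat.nth Nat.Prime r
theorem pr_prime (r) : (pr r).Prime := Nat.prime_nth_prime r
theorem pr_inj : Function.Injective pr := Nat.nth_injective Nat.infinite_setOfPred_prime
theorem pr_pred (r) : pr r - 1 + 1 = pr r := Nat.succ_pred_eq_of_pos (pr_prime r).pos

noncomputable def enc (K : ℕ) (s : ℕ → ℕ) : ℕ := ∏ r ∈ Finset.range K, pr r ^ s r

theorem enc_update (K s r k) (h : r < K) (hk : s r = k + 1) : 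
    enc K s = pr r * enc K (Function.update s r k) := by
  unfold enc
  have hr : r ∈ Finset.range K := Finset.mem_range.2 h
  rw [← Finset.mul_prod_erase _ _ hr, ← Finset.mul_prod_erase _ (fun x => pr x ^ Function.update s r k x) hr]
  rw [hk, Function.update_self, pow_succ]
  have : ∏ x ∈ (Finset.range K).erase r, pr x ^ Function.update s r k x = 
      ∏ x ∈ (Finset.range K).erase r, pr x ^ s x := by
    apply Finset.prod_congr rfl
    intro x hx
    rw [Function.update_of_ne (Finset.ne_of_mem_erase hx)]
  rw [this]; ring

theorem enc_not_dvd (K s r) (hk : s r = 0) : ¬ pr r ∣ enc K s := by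
  unfold enc
  rw [(pr_prime r).prime.dvd_finsetProd_iff]
  rintro ⟨a, -, ha⟩
  have h1 := (Nat.prime_dvd_prime_iff_eq (pr_prime r) (pr_prime a)).1 ((pr_prime r).dvd_of_dvd_pow ha)
  have := pr_inj h1
  subst this
  rw [hk, pow_zero] at ha
  exact (pr_prime r).one_lt.ne' (Nat.dvd_one.1 ha)

noncomputable def Prog.block : Prog → Block
  | .inc r => bMul (pr r)
  | .seq P Q => bSeq P.block Q.block
  | .loop r P => bTest (pr r - 1) (bSeq (bDiv (pr r - 1)) P.block) bBack

theorem Run.does {P s s'} (h : Run P s s') (K) (hK : P.bd ≤ K) :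
    P.block.Does (enc K s, 0) (enc K s', 0) := by
  induction h with
  | inc =>
    rename_i r s
    rw [enc_update K (Function.update s r (s r + 1)) r (s r) hK (by simp)]
    simp only [Function.update_idem, Function.update_eq_self]
    exact bMul_does _ _
  | seq _ _ ih1 ih2 =>
    simp only [Prog.bd, max_le_iff] at hK
    exact bSeq_does (ih1 hK.1) (ih2 hK.2)
  | loop0 h =>
    rename_i r P s
    have := enc_not_dvd K _ _ h
    rw [← pr_pred] at this
    have h2 := bTest_does_no _ (bSeq (bDiv (pr r - 1)) P.block) bBack _ this (bBack_does _ _)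
    rw [zero_add] at h2
    exact h2
  | loop1 h _ _ ih1 ih2 =>
    have hK' := hK
    simp only [Prog.bd, max_le_iff] at hK
    have e := enc_update K _ _ _ hK.1 h
    rw [← pr_pred] at e
    refine bTest_does_yes _ _ _ _ ⟨_, e⟩ ?_ (ih2 hK')
    rw [e]
    refine bSeq_does (bDiv_does _ _ _) ?_
    rw [zero_add]
    exact ih1 hK.2

/-- The final machine. -/
theorem machine_of_prog (P : Prog) : ∃ (B : Block), ∀ (n : ℕ) (s : ℕ → ℕ),
    Run P (Function.update 0 0 n) s →
    (s 1 = 0 → ∃ c, Reaches B.I (B.start, pr 0 ^ n, 0) c ∧ B.I c.1 = .acc) ∧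
    (s 1 = 1 → ∃ c, Reaches B.I (B.start, pr 0 ^ n, 0) c ∧ B.I c.1 = .rej) := by
  refine ⟨bSeq P.block (bTest (pr 1 - 1) bRej bSkip), fun n s h => ?_⟩
  set K := max P.bd 2
  have h1 := h.does K (le_max_left _ _)
  have e : enc K (Function.update 0 0 n) = pr 0 ^ n := by
    unfold enc
    rw [Finset.prod_eq_single 0]
    · simp
    · intro b _ hb; simp [Function.update_of_ne hb]
    · intro h; exact absurd (Finset.mem_range.2 (by simp [K])) h
  rw [e] at h1
  constructor
  · intro hs
    have := enc_not_dvd K _ _ hs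
    rw [← pr_pred] at this
    exact ⟨_, bSeq_does h1 (bTest_does_no _ bRej bSkip _ this (bSkip_does _)), Block.hexit _⟩
  · intro hs
    have e := enc_update K _ _ _ (by simp [K]) hs
    rw [← pr_pred] at e
    refine ⟨_, (bSeq_left h1).trans (bSeq_right (bTest_yes _ bRej bSkip _ ⟨_, e⟩)), ?_⟩
    simp [bSeq, bTest, bRej, Instr.map]

/-- state equality helper -/
theorem Run.to {P s s' t} (h : Run P s s') (e : s' = t) : Run P s t := e ▸ h

def pSkip (t : ℕ) : Prog := .loop t (.inc t)
theorem pSkip_run {t s} (h : s t = 0) : Run (pSkip t) s s := .loop0 h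

def pClear (r t : ℕ) : Prog := .loop r (pSkip t)
theorem pClear_run {r t} (hrt : r ≠ t) {s : ℕ → ℕ} (h : s t = 0) :
    Run (pClear r t) s (Function.update s r 0) := by
  generalize hk : s r = k
  induction k generalizing s with
  | zero => exact (Run.loop0 hk).to (by rw [← hk, Function.update_eq_self])
  | succ k ih =>
    refine .loop1 hk (pSkip_run (by rwa [Function.update_of_ne hrt.symm])) ?_
    refine (ih (s := Function.update s r k) ?_ ?_).to ?_
    · rwa [Function.update_of_ne hrt.symm]
    · simp
    · simp

/-- move `r` to `q` additively -/
def pMove (r q : ℕ) : Prog := .loop r (.inc q)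
theorem pMove_run {r q} (hrt : r ≠ q) (s : ℕ → ℕ) :
    Run (pMove r q) s (Function.update (Function.update s r 0) q (s q + s r)) := by
  generalize hk : s r = k
  induction k generalizing s with
  | zero => exact (Run.loop0 hk).to (by
      funext x; simp only [Function.update_apply]; grind)
  | succ k ih =>
    refine .loop1 hk .inc ?_
    refine (ih _ ?_).to ?_
    · simp only [Function.update_apply]; grind
    · funext x; simp only [Function.update_apply]; grind

def pMove2 (r q t : ℕ) : Prog := .loop r (.seq (.inc q) (.inc t))
theorem pMove2_run {r q t} (hrt : r ≠ q) (h2 : r ≠ t) (h3 : q ≠ t) (s : ℕ → ℕ) :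
    Run (pMove2 r q t) s (Function.update (Function.update (Function.update s r 0) q (s q + s r))
      t (s t + s r)) := by
  generalize hk : s r = k
  induction k generalizing s with
  | zero => exact (Run.loop0 hk).to (by
      funext x; simp only [Function.update_apply]; grind)
  | succ k ih =>
    refine .loop1 hk (.seq .inc .inc) ?_
    refine (ih _ ?_).to ?_
    · simp only [Function.update_apply]; grind
    · funext x; simp only [Function.update_apply]; grind

def pCopy (r q t : ℕ) : Prog := .seq (pMove2 r q t) (pMove t r)
theorem pCopy_run {r q t} (hrt : r ≠ q) (h2 : r ≠ t) (h3 : q ≠ t) (s : ℕ → ℕ) (h : s t = 0) :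
    Run (pCopy r q t) s (Function.update s q (s q + s r)) := by
  refine (Run.seq (pMove2_run hrt h2 h3 s) (pMove_run h2.symm _)).to ?_
  funext x; simp only [Function.update_apply]; grind

def Cmp {n : ℕ} (f : List.Vector ℕ n →. ℕ) : Prop :=
  ∀ (ins : Fin n → ℕ) (out m : ℕ), (∀ i, ins i < m) → out < m → (∀ i, ins i ≠ out) →
    ∃ P, ∀ s : ℕ → ℕ, (∀ r, m ≤ r → s r = 0) → ∀ v ∈ f (List.Vector.ofFn fun i => s (ins i)),
      Run P s (Function.update s out (s out + v))

theorem cmp_zero : Cmp (n := 0) (fun _ => Part.some 0) := by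
  intro ins out m h1 h2 h3
  refine ⟨pSkip m, fun s hs v hv => ?_⟩
  simp only [Part.mem_some_iff] at hv
  subst hv
  exact (pSkip_run (hs _ le_rfl)).to (by simp)

theorem cmp_get {n} (i : Fin n) : Cmp (fun v => Part.some (v.get i)) := by
  intro ins out m h1 h2 h3
  refine ⟨pCopy (ins i) out m, fun s hs v hv => ?_⟩
  simp only [Part.mem_some_iff, List.Vector.get_ofFn] at hv
  subst hv
  exact pCopy_run (h3 i) (h1 i).ne h2.ne s (hs _ le_rfl)

theorem cmp_succ : Cmp (n := 1) (fun v => Part.some (Nat.succ v.head)) := by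
  intro ins out m h1 h2 h3
  refine ⟨.seq (pCopy (ins 0) out m) (.inc out), fun s hs v hv => ?_⟩
  simp only [Part.mem_some_iff, ← List.Vector.get_zero, List.Vector.get_ofFn] at hv
  subst hv
  refine (Run.seq (pCopy_run (h3 0) (h1 0).ne h2.ne s (hs _ le_rfl)) .inc).to ?_
  funext x; simp only [Function.update_apply]; grind

theorem mem_mOfFn {n : ℕ} {α : Type} (f : Fin n → Part α) (v : List.Vector α n)
    (h : v ∈ (List.Vector.mOfFn f : Part _)) : ∀ i, v.get i ∈ f i := by
  induction n with
  | zero => exact fun i => i.elim0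
  | succ n ih =>
    simp only [List.Vector.mOfFn, Part.bind_eq_bind, Part.mem_bind_iff, Part.pure_eq_some, Part.mem_some_iff] at h
    obtain ⟨a, ha, w, hw, rfl⟩ := h
    intro i
    refine Fin.cases ?_ (fun j => ?_) i
    · simpa using ha
    · simpa using ih _ _ hw j

theorem cmp_comp {m' n} {f : List.Vector ℕ n →. ℕ} (g : Fin n → List.Vector ℕ m' →. ℕ)
    (hf : Cmp f) (hg : ∀ i, Cmp (g i)) :
    Cmp (fun v => (List.Vector.mOfFn fun i => g i v) >>= f) := by
  intro ins out m h1 h2 h3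
  have step : ∀ k ≤ n, ∃ P, ∀ s : ℕ → ℕ, (∀ r, m ≤ r → s r = 0) → ∀ w : ℕ → ℕ,
      (∀ i : Fin n, w i ∈ g i (List.Vector.ofFn fun i => s (ins i))) →
      Run P s (fun r => if m ≤ r ∧ r < m + k then w (r - m) else s r) := by
    intro k
    induction k with
    | zero =>
      intro _
      refine ⟨pSkip m, fun s hs w _ => (pSkip_run (hs _ le_rfl)).to ?_⟩
      funext r; grind
    | succ k ih =>
      intro hk
      obtain ⟨P, hP⟩ := ih (by omega)
      obtain ⟨Q, hQ⟩ := hg ⟨k, hk⟩ ins (m + k) (m + n) (fun i => by have := h1 i; omega) (by omega)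
        (fun i => by have := h1 i; omega)
      refine ⟨.seq P Q, fun s hs w hw => ?_⟩
      refine (Run.seq (hP s hs w hw) (hQ _ (fun r hr => ?_) (w k) ?_)).to ?_
      · have := hs r (by omega); grind
      · have := hw ⟨k, hk⟩
        have e : ∀ i, ¬ (m ≤ ins i ∧ ins i < m + k) := fun i => by have := h1 i; omega
        simpa [e] using this
      · have := hs (m + k) (by omega)
        funext x; simp only [Function.update_apply]; grind
  have clr : ∀ k ≤ n, ∃ P, ∀ s : ℕ → ℕ, (∀ r, m + n ≤ r → s r = 0) →
      Run P s (fun r => if m ≤ r ∧ r < m + k then 0 else s r) := by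
    intro k
    induction k with
    | zero =>
      intro _
      refine ⟨pSkip (m + n), fun s hs => (pSkip_run (hs _ le_rfl)).to ?_⟩
      funext r; grind
    | succ k ih =>
      intro hk
      obtain ⟨P, hP⟩ := ih (by omega)
      refine ⟨.seq P (pClear (m + k) (m + n)), fun s hs => ?_⟩
      refine (Run.seq (hP s hs) (pClear_run (by omega) ?_)).to ?_
      · have := hs (m + n) le_rfl; grind
      · funext x; simp only [Function.update_apply]; grind
  obtain ⟨P, hP⟩ := step n le_rfl
  obtain ⟨C, hC⟩ := clr n le_rfl
  obtain ⟨Q, hQ⟩ := hf (fun i => m + i) out (m + n) (fun i => by omega) (by omega)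
    (fun i => by omega)
  refine ⟨.seq P (.seq Q C), fun s hs v hv => ?_⟩
  obtain ⟨w, hw, hv⟩ := Part.mem_bind_iff.1 hv
  have hw' := mem_mOfFn _ _ hw
  let W : ℕ → ℕ := fun i => if h : i < n then w.get ⟨i, h⟩ else 0
  refine (Run.seq (hP s hs W ?_) (.seq (hQ _ ?_ v ?_) (hC _ ?_))).to ?_
  · intro i; simpa [W] using hw' i
  · intro r hr; have := hs r (by omega); grind
  · convert hv using 1
    congr 1
    ext i
    simp [W]
  · intro r hr; have := hs r (by omega); simp only [Function.update_apply]; grind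
  · funext x
    have := hs x
    simp only [Function.update_apply]; grind

theorem ofFn_cons2 {n} (a b : ℕ) (v : Fin n → ℕ) :
    List.Vector.ofFn (Fin.cons a (Fin.cons b v) : Fin (n+2) → ℕ) = a ::ᵥ b ::ᵥ List.Vector.ofFn v := by
  simp [List.Vector.ofFn]

theorem cmp_prec {n} {f : List.Vector ℕ n → ℕ} {g : List.Vector ℕ (n + 2) → ℕ}
    (hf : Cmp (fun v => Part.some (f v))) (hg : Cmp (fun v => Part.some (g v))) :
    Cmp (fun v : List.Vector ℕ (n + 1) => Part.some
      (v.head.rec (f v.tail) fun y IH => g (y ::ᵥ IH ::ᵥ v.tail) : ℕ)) := by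
  intro ins out m h1 h2 h3
  obtain ⟨Pf, hPf⟩ := hf (fun i => ins i.succ) (m + 2) (m + 4) (fun i => by have := h1 i.succ; omega)
    (by omega) (fun i => by have := h1 i.succ; omega)
  obtain ⟨Pg, hPg⟩ := hg (Fin.cons (m + 1) (Fin.cons (m + 2) fun i => ins i.succ)) (m + 3) (m + 4)
    (fun i => by
      refine Fin.cases ?_ (fun i => Fin.cases ?_ (fun i => ?_) i) i
      · simp
      · simp
      · have := h1 i.succ; simp only [Fin.cons_succ]; omega)
    (by omega)
    (fun i => by
      refine Fin.cases ?_ (fun i => Fin.cases ?_ (fun i => ?_) i) i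
      · simp
      · simp
      · have := h1 i.succ; simp only [Fin.cons_succ]; omega)
  let body : Prog := .seq Pg (.seq (pClear (m + 2) (m + 4)) (.seq (pMove (m + 3) (m + 2)) (.inc (m + 1))))
  refine ⟨.seq (pCopy (ins 0) m (m + 4)) (.seq Pf (.seq (.loop m body) (.seq (pMove (m + 2) out)
    (pClear (m + 1) (m + 4))))), fun s hs v hv => ?_⟩
  have hi : ∀ i, ins i < m := h1
  let st : ℕ → ℕ → ℕ → ℕ → ℕ := fun a b c => 
    Function.update (Function.update (Function.update s m a) (m + 1) b) (m + 2) c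
  set t : List.Vector ℕ n := List.Vector.ofFn fun i => s (ins i.succ) with ht
  let R : ℕ → ℕ := fun k => k.rec (f t) fun y IH => g (y ::ᵥ IH ::ᵥ t)
  have z0 := hs m le_rfl
  have z1 := hs (m + 1) (by omega)
  have z2 := hs (m + 2) (by omega)
  have z3 := hs (m + 3) (by omega)
  have z4 := hs (m + 4) (by omega)
  have hv' : v = R (s (ins 0)) := by
    simp only [Part.mem_some_iff] at hv
    rw [hv]
    simp only [List.Vector.ofFn, List.Vector.head_cons, List.Vector.tail_cons]
    rfl
  have hbody : ∀ a b, Run body (st a b (R b)) (st a (b + 1) (R (b + 1))) := by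
    intro a b
    refine (Run.seq (hPg _ ?_ (R (b + 1)) ?_) (.seq (pClear_run (by omega) ?_) 
      (.seq (pMove_run (by omega) _) .inc))).to ?_
    · intro r hr; have := hs r (by omega); simp only [st, Function.update_apply]; grind
    · simp only [Part.mem_some_iff]
      have : (fun i => st a b (R b) ((Fin.cons (m + 1) (Fin.cons (m + 2) fun i => ins i.succ) : Fin (n+2) → ℕ) i))
        = (Fin.cons b (Fin.cons (R b) fun i => s (ins i.succ)) : Fin (n+2) → ℕ) := by
        funext i
        refine Fin.cases ?_ (fun i => Fin.cases ?_ (fun i => ?_) i) i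
        · simp [st, Function.update_apply]
        · simp [st, Function.update_apply]
        · have := h1 i.succ; simp only [Fin.cons_succ, st, Function.update_apply]; grind
      rw [this, ofFn_cons2]
    · simp only [st, Function.update_apply]; grind
    · funext x; simp only [st, Function.update_apply]; grind
  have hloop : ∀ a b, Run (.loop m body) (st a b (R b)) (st 0 (a + b) (R (a + b))) := by
    intro a
    induction a with
    | zero => intro b; exact (Run.loop0 (by simp [st, Function.update_apply])).to (by simp)
    | succ a ih =>
      intro b
      refine .loop1 (k := a) (s' := st a (b + 1) (R (b + 1))) ?_ ?_ ((ih (b + 1)).to ?_)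
      · simp [st, Function.update_apply]
      · convert hbody a b using 1
        funext x; simp only [st, Function.update_apply]; grind
      · rw [show a + (b + 1) = a + 1 + b by ring]
  have hl := hloop (s (ins 0)) 0
  have hi0 := hi 0
  refine (Run.seq (pCopy_run (by omega) (by omega) (by omega) s z4)
    (.seq ((hPf _ ?_ (f t) ?_).to (t := st (s (ins 0)) 0 (R 0)) ?_) (.seq hl (.seq (pMove_run (by omega) _) 
      (pClear_run (by omega) ?_))))).to ?_
  · intro r hr; have := hs r (by omega); simp only [Function.update_apply]; grind
  · simp only [Part.mem_some_iff, t]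
    congr 2
    funext i
    have := h1 i.succ
    simp only [Function.update_apply]; grind
  · have : R 0 = f t := rfl
    funext x; simp only [st, Function.update_apply]; grind
  · simp only [st, Function.update_apply]; grind
  · rw [hv', add_zero]
    funext x; simp only [st, Function.update_apply]; grind

theorem cmp_rfind {n} {f : List.Vector ℕ (n + 1) → ℕ} (hf : Cmp (fun v => Part.some (f v))) :
    Cmp (fun v : List.Vector ℕ n => Nat.rfind fun k => Part.some (decide (f (k ::ᵥ v) = 0))) := by
  intro ins out m h1 h2 h3
  obtain ⟨Pf, hPf⟩ := hf (Fin.cons m ins) (m + 1) (m + 2)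
    (fun i => by
      refine Fin.cases ?_ (fun i => ?_) i
      · simp
      · have := h1 i; simp only [Fin.cons_succ]; omega)
    (by omega)
    (fun i => by
      refine Fin.cases ?_ (fun i => ?_) i
      · simp
      · have := h1 i; simp only [Fin.cons_succ]; omega)
  let body : Prog := .seq (pClear (m + 1) (m + 2)) (.seq (.inc m) Pf)
  refine ⟨.seq Pf (.seq (.loop (m + 1) body) (pMove m out)), fun s hs v hv => ?_⟩
  set t : List.Vector ℕ n := List.Vector.ofFn fun i => s (ins i) with ht
  obtain ⟨hv1, hv2⟩ := Nat.mem_rfind.1 hv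
  simp only [Part.mem_some_iff] at hv1 hv2
  have hv1 : f (v ::ᵥ t) = 0 := by simpa using hv1.symm
  have hv2 : ∀ k < v, f (k ::ᵥ t) ≠ 0 := by
    intro k hk; have := @hv2 k hk; simpa using this.symm
  have z0 := hs m le_rfl
  have z1 := hs (m + 1) (by omega)
  have z2 := hs (m + 2) (by omega)
  let st : ℕ → ℕ → ℕ → ℕ := fun a b => Function.update (Function.update s m a) (m + 1) b
  have hrun : ∀ a, Run Pf (st a 0) (st a (f (a ::ᵥ t))) := by
    intro a
    refine (hPf _ ?_ (f (a ::ᵥ t)) ?_).to ?_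
    · intro r hr; have := hs r (by omega); simp only [st, Function.update_apply]; grind
    · simp only [Part.mem_some_iff]
      have : (fun i => st a 0 ((Fin.cons m ins : Fin (n+1) → ℕ) i))
        = (Fin.cons a fun i => s (ins i) : Fin (n+1) → ℕ) := by
        funext i
        refine Fin.cases ?_ (fun i => ?_) i
        · simp [st, Function.update_apply]
        · have := h1 i; simp only [Fin.cons_succ, st, Function.update_apply]; grind
      rw [this]
      simp [List.Vector.ofFn, t]
    · funext x; simp only [st, Function.update_apply]; grind
  have hloop : ∀ d a, a + d = v → Run (.loop (m + 1) body) (st a (f (a ::ᵥ t))) (st v 0) := by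
    intro d
    induction d with
    | zero =>
      intro a ha
      simp only [add_zero] at ha
      subst ha
      rw [hv1]
      exact .loop0 (by simp [st, Function.update_apply])
    | succ d ih =>
      intro a ha
      obtain ⟨k, hk⟩ := Nat.exists_eq_succ_of_ne_zero (hv2 a (by omega))
      refine .loop1 (k := k) (s' := st (a + 1) (f ((a + 1) ::ᵥ t))) ?_ ?_ (ih (a + 1) (by omega))
      · simp [st, Function.update_apply, hk]
      · refine .seq (pClear_run (by omega) ?_) (.seq .inc ?_)
        · simp only [st, Function.update_apply]; grind
        · convert hrun (a + 1) using 1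
          funext x; simp only [st, Function.update_apply]; grind
  refine (Run.seq (s' := st 0 (f (0 ::ᵥ t))) ?_ (.seq (hloop v 0 (by omega)) (pMove_run (by omega) _))).to ?_
  · convert hrun 0 using 1
    funext x; simp only [st, Function.update_apply]; grind
  · funext x; simp only [st, Function.update_apply]; grind

theorem cmp_prim {n} {f : List.Vector ℕ n → ℕ} (h : Nat.Primrec' f) :
    Cmp (fun v => Part.some (f v)) := by
  induction h with
  | zero => exact cmp_zero
  | succ => exact cmp_succ
  | get i => exact cmp_get i
  | comp g _ _ ih1 ih2 =>
    refine Eq.mp (congrArg Cmp (funext fun v => ?_)) (cmp_comp (fun i v => Part.some (g i v)) ih1 ih2)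
    refine (congrArg (fun p => Part.bind p _) (Vector.mOfFn_part_some (fun i => g i v))).trans ?_
    exact Part.bind_some _ _
  | prec _ _ ih1 ih2 => exact cmp_prec ih1 ih2

theorem cmp_part {n} {f : List.Vector ℕ n →. ℕ} (h : Nat.Partrec' f) : Cmp f := by
  induction h with
  | prim h => exact cmp_prim h
  | comp g _ _ ih1 ih2 => exact cmp_comp g ih1 ih2
  | rfind _ ih => exact cmp_rfind ih

theorem prog_of_partrec (u : ℕ →. ℕ) (hu : Partrec u) :
    ∃ P : Prog, ∀ n v, v ∈ u n → ∃ s, Run P (Function.update 0 0 n) s ∧ s 1 = v := by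
  obtain ⟨P, hP⟩ := cmp_part (Nat.Partrec'.part_iff₁.2 hu) (fun _ => 0) 1 2 (by simp) (by simp) (by simp)
  refine ⟨P, fun n v hv => ⟨_, hP (Function.update 0 0 n) ?_ v ?_, ?_⟩⟩
  · intro r hr
    rw [Function.update_of_ne (by omega)]; rfl
  · simpa using hv
  · simp [Function.update_apply]

/-! ### Rules -/

abbrev Col := ZMod 4 × ZMod 4
/-- axis (`false` horizontal) and sign (`true` positive) -/
abbrev Port := Bool × Bool

def opp (d : Port) : Port := (d.1, !d.2)
def sg {R : Type} [Ring R] (s : Bool) : R := if s then 1 else -1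
def dl {R : Type} [Ring R] (d : Port) : R × R := if d.1 then (0, sg d.2) else (sg d.2, 0)
def ev (z : ZMod 4) : Bool := decide (z.val % 2 = 0)
def rk (v : Col) (d : Port) : ℕ :=
  if d.1 then (if ev v.1 then 2 else 4) else (if ev v.2 then 1 else 3)

inductive Pd (Λ : Type) : Type
  | kd (v : Col) (d : Port)
  | zr (c : Bool)
  | ps (c : Bool)
  | lab (l : Λ)

inductive Cn (P : Type) : Type
  | eq
  | rel (k : Fin 2)
  | pr (p : P)
  | fls

inductive Rl (P : Type) : Type
  | E (p : P) (k : Fin 2) (q : P)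
  | H (p1 p2 p3 : P) (k : Fin 2) (q : P) (c : Cn P)
  | S (p1 p2 p3 p4 : P)

def Cn.Holds {P A : Type} (U : P → A → Prop) (T : Fin 2 → A → A → Prop) (x y : A) : Cn P → Prop
  | .eq => x = y
  | .rel k => T k x y
  | .pr p => U p y
  | .fls => False

def Rl.Holds {P A : Type} (U : P → A → Prop) (T : Fin 2 → A → A → Prop) : Rl P → Prop
  | .E p k q => ∀ x, U p x → ∃ y, T k x y ∧ U q y
  | .H p1 p2 p3 k q c => ∀ x, U p1 x → U p2 x → U p3 x → ∀ y, T k x y → U q y → c.Holds U T x y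
  | .S p1 p2 p3 p4 => ∃ x, U p1 x ∧ U p2 x ∧ U p3 x ∧ U p4 x

section rules
variable {Λ : Type}

noncomputable def lst (α : Type) [Fintype α] : List α := Finset.univ.toList
theorem mem_lst {α : Type} [Fintype α] (a : α) : a ∈ lst α := by simp [lst]

def r1 (i : Col × Port × Port) : Rl (Pd Λ) := .E (.kd i.1 i.2.1) 1 (.kd i.1 i.2.2)
def r2 (i : Col × Port) : Rl (Pd Λ) :=
  .H (.kd i.1 i.2) (.kd i.1 i.2) (.kd i.1 i.2) 1 (.kd i.1 i.2) .eq
def r3 (i : Col × Port) : Rl (Pd Λ) := .E (.kd i.1 i.2) 0 (.kd (i.1 + dl i.2) (opp i.2))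
def r4 (i : Col × Port) : Rl (Pd Λ) :=
  .H (.kd i.1 i.2) (.kd i.1 i.2) (.kd i.1 i.2) 0 (.kd i.1 i.2) .eq
def r5 (i : Col × Port × Port) : Rl (Pd Λ) :=
  if rk i.1 i.2.2 = rk i.1 i.2.1 + 1 then
    .H (.kd i.1 i.2.1) (.kd i.1 i.2.1) (.kd i.1 i.2.1) 1 (.kd i.1 i.2.2) (.rel 0)
  else r1 i
def r6 (i : Col × Port × Port) : Rl (Pd Λ) :=
  if rk i.1 i.2.1 = 1 ∧ rk i.1 i.2.2 = 4 then
    .H (.kd i.1 i.2.1) (.kd i.1 i.2.1) (.kd i.1 i.2.1) 0 (.kd i.1 i.2.2) (.rel 1)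
  else r1 i
def r7 (p : Pd Λ) (i : Col × Port × Port) : Rl (Pd Λ) :=
  .H p p (.kd i.1 i.2.1) 1 (.kd i.1 i.2.2) (.pr p)
/-- move predicate along a link -/
def rl (p p' : Pd Λ) (q : Pd Λ) (d : Port) (v : Col) : Rl (Pd Λ) :=
  .H p p' (.kd v d) 0 (.kd (v + dl d) (opp d)) (.pr q)
/-- conclusion at the same node -/
def rs (p p' : Pd Λ) (q : Cn (Pd Λ)) (i : Col × Port) : Rl (Pd Λ) :=
  .H p p' (.kd i.1 i.2) 1 (.kd i.1 i.2) q

noncomputable def geo : List (Rl (Pd Λ)) :=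
  (lst _).map r1 ++ (lst _).map r2 ++ (lst _).map r3 ++ (lst _).map r4 ++ (lst _).map r5 ++
  (lst _).map r6 ++
  ((lst Bool).flatMap fun c => (lst _).map (r7 (.zr c)) ++ (lst _).map (r7 (.ps c)) ++
    ((lst Bool).flatMap fun s => (lst _).map (rl (.zr c) (.zr c) (.zr c) (!c, s)) ++
      (lst _).map (rl (.ps c) (.ps c) (.ps c) (!c, s))))

noncomputable def insR (l : Λ) : Instr Λ → List (Rl (Pd Λ))
  | .inc c l' => (lst _).map (rl (.lab l) (.lab l) (.lab l') (c, true)) ++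
      (lst _).map (rl (.lab l) (.lab l) (.ps c) (c, true))
  | .dec c l0 l1 => (lst _).map (rs (.lab l) (.zr c) (.pr (.lab l0))) ++
      (lst _).map (rl (.lab l) (.ps c) (.lab l1) (c, false))
  | .nop l' => (lst _).map (rs (.lab l) (.lab l) (.pr (.lab l')))
  | .acc => []
  | .rej => (lst _).map (rs (.lab l) (.lab l) .fls)

noncomputable def labR (l : Λ) (i : Instr Λ) : List (Rl (Pd Λ)) :=
  (lst _).map (r7 (.lab l)) ++ insR l i

def seed (l : Λ) : Rl (Pd Λ) := .S (.kd 0 (false, true)) (.zr false) (.zr true) (.lab l)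

structure Spec {A : Type} (I : Λ → Instr Λ) (Used : Λ → Prop) (l0 : Λ)
    (U : Pd Λ → A → Prop) (T : Fin 2 → A → A → Prop) : Prop where
  g : ∀ r ∈ geo, Rl.Holds U T r
  s : Rl.Holds U T (seed l0)
  l : ∀ l, Used l → ∀ r ∈ labR l (I l), Rl.Holds U T r

/-! ### From models to the grid -/

variable {A : Type}

structure Geo (U : Pd Λ → A → Prop) (T : Fin 2 → A → A → Prop) : Prop where
  t0 : ∀ {x y z}, T 0 x y → T 0 y z → T 0 x z
  t1 : ∀ {x y z}, T 1 x y → T 1 y z → T 1 x z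
  g1 : ∀ {v d x} (d'), U (.kd v d) x → ∃ y, T 1 x y ∧ U (.kd v d') y
  g2 : ∀ {v d x y}, U (.kd v d) x → T 1 x y → U (.kd v d) y → x = y
  g3 : ∀ {v d x}, U (.kd v d) x → ∃ y, T 0 x y ∧ U (.kd (v + dl d) (opp d)) y
  g4 : ∀ {v d x y}, U (.kd v d) x → T 0 x y → U (.kd v d) y → x = y
  g5 : ∀ {v d d' x y}, rk v d' = rk v d + 1 → U (.kd v d) x → T 1 x y → U (.kd v d') y → T 0 x y
  g6 : ∀ {v d d' x y}, rk v d = 1 → rk v d' = 4 → U (.kd v d) x → T 0 x y → U (.kd v d') y → T 1 x y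

theorem Spec.geo {I : Λ → Instr Λ} {Used l0} {U : Pd Λ → A → Prop} {T : Fin 2 → A → A → Prop}
    (h : Spec I Used l0 U T) (ht : ∀ k, Transitive (T k)) : Geo U T := by
  have hg := h.g
  simp only [FlutedTwoTransEq.geo, List.forall_mem_append, List.forall_mem_map] at hg
  obtain ⟨⟨⟨⟨⟨⟨h1, h2⟩, h3⟩, h4⟩, h5⟩, h6⟩, -⟩ := hg
  refine ⟨fun h h' => ht 0 h h', fun h h' => ht 1 h h', ?_, ?_, ?_, ?_, ?_, ?_⟩
  · intro v d x d' hx; exact h1 (v, d, d') (mem_lst _) x hx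
  · intro v d x y hx hxy hy; exact h2 (v, d) (mem_lst _) x hx hx hx y hxy hy
  · intro v d x hx; exact h3 (v, d) (mem_lst _) x hx
  · intro v d x y hx hxy hy; exact h4 (v, d) (mem_lst _) x hx hx hx y hxy hy
  · intro v d d' x y hr hx hxy hy
    have := h5 (v, d, d') (mem_lst _)
    rw [r5, if_pos hr] at this
    exact this x hx hx hx y hxy hy
  · intro v d d' x y hr hr' hx hxy hy
    have := h6 (v, d, d') (mem_lst _)
    rw [r6, if_pos ⟨hr, hr'⟩] at this
    exact this x hx hx hx y hxy hy

theorem opp_opp (d : Port) : opp (opp d) = d := by simp [opp]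
theorem dl_opp (d : Port) : (dl (opp d) : Col) = - dl d := by revert d; decide

structure Nd (U : Pd Λ → A → Prop) (T : Fin 2 → A → A → Prop) where
  v : Col
  c : Port → A
  hk : ∀ d, U (.kd v d) (c d)
  ht : ∀ d d', T 1 (c d) (c d')

variable {U : Pd Λ → A → Prop} {T : Fin 2 → A → A → Prop}

theorem Geo.ext (G : Geo U T) {n n' : Nd U T} (hv : n.v = n'.v) (d : Port) (h : n.c d = n'.c d) :
    n = n' := by
  obtain ⟨v, c, hk, ht⟩ := n
  obtain ⟨v', c', hk', ht'⟩ := n'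
  simp only at hv h
  subst hv
  have : c = c' := by
    funext d'
    refine G.g2 (hk d') (G.t1 (ht d' d) ?_) (hk' d')
    rw [h]; exact ht' d d'
  subst this
  rfl

theorem Geo.nodeOf (G : Geo U T) {v d x} (hx : U (.kd v d) x) :
    ∃ n : Nd U T, n.v = v ∧ n.c d = x := by
  choose y hy1 hy2 using fun d' => G.g1 d' hx
  have back : ∀ d', T 1 (y d') x := by
    intro d'
    obtain ⟨z, hz1, hz2⟩ := G.g1 d (hy2 d')
    have := G.g2 hx (G.t1 (hy1 d') hz1) hz2
    rwa [this]
  exact ⟨⟨v, y, hy2, fun d d' => G.t1 (back d) (hy1 d')⟩, rfl, (G.g2 hx (hy1 d) (hy2 d)).symm⟩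

def Link (d : Port) (n n' : Nd U T) : Prop := n'.v = n.v + dl d ∧ T 0 (n.c d) (n'.c (opp d))

theorem Geo.link_symm (G : Geo U T) {d} {n n' : Nd U T} (h : Link d n n') : Link (opp d) n' n := by
  have hv : n.v = n'.v + dl (opp d) := by rw [h.1, dl_opp]; ring
  refine ⟨hv, ?_⟩
  rw [opp_opp]
  obtain ⟨z, hz1, hz2⟩ := G.g3 (n'.hk (opp d))
  rw [← hv, opp_opp] at hz2
  have := G.g4 (n.hk d) (G.t0 h.2 hz1) hz2
  rwa [this]

theorem Geo.link_unique (G : Geo U T) {d} {n n' n'' : Nd U T} (h : Link d n n') (h' : Link d n n'') :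
    n' = n'' := by
  have hs := (G.link_symm h).2
  rw [opp_opp] at hs
  refine G.ext (h.1.trans h'.1.symm) (opp d) (G.g4 (n'.hk _) (G.t0 hs h'.2) ?_)
  rw [h.1, ← h'.1]; exact n''.hk _

theorem Geo.link_ex (G : Geo U T) (d) (n : Nd U T) : ∃ n', Link d n n' := by
  obtain ⟨y, hy, hy'⟩ := G.g3 (n.hk d)
  obtain ⟨n', h1, h2⟩ := G.nodeOf hy'
  exact ⟨n', h1, by rwa [h2]⟩

noncomputable def Geo.st (G : Geo U T) (d : Port) (n : Nd U T) : Nd U T := (G.link_ex d n).choose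
theorem Geo.st_link (G : Geo U T) (d) (n : Nd U T) : Link d n (G.st d n) := (G.link_ex d n).choose_spec
theorem Geo.st_opp (G : Geo U T) (d) (n : Nd U T) : G.st (opp d) (G.st d n) = n :=
  G.link_unique (G.st_link _ _) (G.link_symm (G.st_link d n))

theorem Geo.turn (G : Geo U T) (n : Nd U T) (d d' : Port) (h : rk n.v d' = rk n.v d + 1) :
    T 0 (n.c d) (n.c d') := G.g5 h (n.hk d) (n.ht d d') (n.hk d')

theorem rk_face : ∀ (v : Col) (s t : Bool), ev v.1 = false → ev v.2 = true →
    rk v (false, s) = 1 ∧ rk v (true, t) = 4 ∧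
    rk (v + dl (false, s)) (true, t) = rk (v + dl (false, s)) (opp (false, s)) + 1 ∧
    rk (v + dl (false, s) + dl (true, t)) (opp (false, s)) =
      rk (v + dl (false, s) + dl (true, t)) (opp (true, t)) + 1 ∧
    rk (v + dl (true, t)) (opp (true, t)) = rk (v + dl (true, t)) (false, s) + 1 := by
  decide

theorem Geo.face (G : Geo U T) (n : Nd U T) (h1 : ev n.v.1 = false) (h2 : ev n.v.2 = true) (s t) :
    G.st (true, t) (G.st (false, s) n) = G.st (false, s) (G.st (true, t) n) := by
  obtain ⟨e1, e2, e3, e4, e5⟩ := rk_face n.v s t h1 h2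
  set h : Port := (false, s)
  set w : Port := (true, t)
  set Y := G.st h n with hY
  set Z := G.st w Y with hZ
  set W := G.st (opp h) Z with hW
  set X := G.st (opp w) W with hX
  have lY := G.st_link h n
  have lZ := G.st_link w Y
  have lW := G.st_link (opp h) Z
  have lX := G.st_link (opp w) W
  rw [← hY] at lY
  rw [← hZ] at lZ
  rw [← hW] at lW
  rw [← hX] at lX
  have vY := lY.1
  have vZ : Z.v = n.v + dl h + dl w := by rw [lZ.1, vY]
  have vW : W.v = n.v + dl w := by rw [lW.1, vZ, dl_opp]; ring
  have vX : X.v = n.v := by rw [lX.1, vW, dl_opp]; ring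
  have p1 := lY.2
  have p2 := G.turn Y (opp h) w (by rw [vY]; exact e3)
  have p3 := lZ.2
  have p4 := G.turn Z (opp w) (opp h) (by rw [vZ]; exact e4)
  have p5 := lW.2
  have p6 := G.turn W h (opp w) (by rw [vW]; exact e5)
  have p7 := lX.2
  rw [opp_opp] at p5 p7
  have p := G.t0 p1 (G.t0 p2 (G.t0 p3 (G.t0 p4 (G.t0 p5 (G.t0 p6 p7)))))
  have hk := X.hk w
  rw [vX] at hk
  have q := G.g6 e1 e2 (n.hk h) p hk
  have hX' : X = n := G.ext vX w (G.g2 (n.hk w) (G.t1 (n.ht w h) q) hk).symm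
  have a1 : G.st w X = W := by
    have := G.st_opp (opp w) W
    rwa [opp_opp] at this
  have a2 : G.st h W = Z := by
    have := G.st_opp (opp h) Z
    rwa [opp_opp] at this
  rw [← a2, ← a1, hX']

theorem ev_dl : ∀ (v : Col), ev (v + dl (false, true)).1 = !ev v.1 ∧ ev (v + dl (false, true)).2 = ev v.2 ∧
    ev (v + dl (true, true)).2 = !ev v.2 ∧ ev (v + dl (true, true)).1 = ev v.1 := by decide

theorem Geo.comm (G : Geo U T) (n : Nd U T) :
    G.st (true, true) (G.st (false, true) n) = G.st (false, true) (G.st (true, true) n) := by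
  obtain ⟨a1, a2, a3, a4⟩ := ev_dl n.v
  have oR : ∀ n, G.st (false, false) (G.st (false, true) n) = n := fun n => G.st_opp (false, true) n
  have oL : ∀ n, G.st (false, true) (G.st (false, false) n) = n := fun n => G.st_opp (false, false) n
  have oU : ∀ n, G.st (true, false) (G.st (true, true) n) = n := fun n => G.st_opp (true, true) n
  have oD : ∀ n, G.st (true, true) (G.st (true, false) n) = n := fun n => G.st_opp (true, false) n
  have vR := (G.st_link (false, true) n).1
  have vU := (G.st_link (true, true) n).1
  have vUR := (G.st_link (true, true) (G.st (false, true) n)).1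
  rw [vR] at vUR
  rcases h1 : ev n.v.1 <;> rcases h2 : ev n.v.2
  · have := G.face (G.st (true, true) n) (by rw [vU, a4, h1]) (by rw [vU, a3, h2]; rfl) true false
    rw [oU] at this
    rw [← this, oD]
  · exact G.face n h1 h2 true true
  · obtain ⟨b1, b2, b3, b4⟩ := ev_dl (n.v + dl (false, true))
    have := G.face (G.st (true, true) (G.st (false, true) n)) (by rw [vUR, b4, a1, h1]; rfl)
      (by rw [vUR, b3, a2, h2]; rfl) false false
    rw [oU, oR] at this
    have e := oD (G.st (false, false) (G.st (true, true) (G.st (false, true) n)))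
    rw [this] at e
    rw [e, oL]
  · have := G.face (G.st (false, true) n) (by rw [vR, a1, h1]; rfl) (by rw [vR, a2, h2]) false true
    rw [oR] at this
    rw [this, oL]

noncomputable def Geo.grid (G : Geo U T) (n : Nd U T) (i j : ℕ) : Nd U T :=
  (G.st (true, true))^[j] ((G.st (false, true))^[i] n)

theorem Geo.grid_up (G : Geo U T) (n : Nd U T) (i j : ℕ) :
    G.grid n i (j + 1) = G.st (true, true) (G.grid n i j) := Function.iterate_succ_apply' _ _ _

theorem Geo.grid_right (G : Geo U T) (n : Nd U T) (i j : ℕ) :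
    G.grid n (i + 1) j = G.st (false, true) (G.grid n i j) := by
  have hc : Function.Commute (G.st (true, true)) (G.st (false, true)) := fun n => G.comm n
  unfold Geo.grid
  rw [Function.iterate_succ_apply']
  exact (hc.iterate_left j) _

theorem Geo.grid_down (G : Geo U T) (n : Nd U T) (i j : ℕ) :
    G.grid n i j = G.st (true, false) (G.grid n i (j + 1)) := by
  rw [G.grid_up]; exact (G.st_opp (true, true) _).symm

theorem Geo.grid_left (G : Geo U T) (n : Nd U T) (i j : ℕ) :
    G.grid n i j = G.st (false, false) (G.grid n (i + 1) j) := by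
  rw [G.grid_right]; exact (G.st_opp (false, true) _).symm

def Has (p : Pd Λ) (n : Nd U T) : Prop := ∀ d, U p (n.c d)

theorem has_of {p : Pd Λ} (h : ∀ i, Rl.Holds U T (r7 p i)) (n : Nd U T) {d} (hx : U p (n.c d)) :
    Has p n := fun d' => h (n.v, d, d') _ hx hx (n.hk d) _ (n.ht d d') (n.hk d')

theorem Geo.has_link (G : Geo U T) {p p' q : Pd Λ} {d} (h7 : ∀ i, Rl.Holds U T (r7 q i))
    (h : ∀ v, Rl.Holds U T (rl p p' q d v))
    {n : Nd U T} (hp : Has p n) (hp' : Has p' n) : Has q (G.st d n) := by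
  have hl := G.st_link d n
  refine has_of h7 _ (d := opp d) (h n.v _ (hp d) (hp' d) (n.hk d) _ hl.2 ?_)
  rw [← hl.1]; exact Nd.hk _ _

theorem has_same {p p' q : Pd Λ} (h : ∀ v, Rl.Holds U T (rs p p' (.pr q) v))
    {n : Nd U T} (hp : Has p n) (hp' : Has p' n) : Has q n := fun d =>
  h (n.v, d) _ (hp d) (hp' d) (n.hk d) _ (n.ht d d) (n.hk d)

theorem Spec.no_model {I : Λ → Instr Λ} {Used l0} (h : Spec I Used l0 U T)
    (ht : ∀ k, Transitive (T k)) (hu0 : Used l0)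
    (hu : ∀ a b, Step I a b → Used a.1 → Used b.1) {c} (hr : Reaches I (l0, 0, 0) c)
    (hc : I c.1 = .rej) : False := by
  have G := h.geo ht
  have hg := h.g
  simp only [FlutedTwoTransEq.geo, List.forall_mem_append, List.forall_mem_map, List.forall_mem_flatMap] at hg
  have h7 := fun c => (hg.2 c (mem_lst _)).1
  have h9 := fun c s => (hg.2 c (mem_lst _)).2 s (mem_lst _)
  have hl : ∀ l, Used l → ∀ i, Rl.Holds U T (r7 (.lab l) i) := fun l hu i =>
    h.l l hu _ (List.mem_append_left _ (List.mem_map_of_mem (mem_lst i)))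
  have hi : ∀ l, Used l → ∀ r ∈ insR l (I l), Rl.Holds U T r := fun l hu r hr =>
    h.l l hu r (List.mem_append_right _ hr)
  obtain ⟨x, hx1, hx2, hx3, hx4⟩ := h.s
  obtain ⟨n, hn, hnx⟩ := G.nodeOf hx1
  rw [← hnx] at hx2 hx3 hx4
  have z7 : ∀ c i, Rl.Holds U T (r7 (.zr c) i) := fun c i => (h7 c).1 i (mem_lst _)
  have p7 : ∀ c i, Rl.Holds U T (r7 (.ps c) i) := fun c i => (h7 c).2 i (mem_lst _)
  have z9 : ∀ c s v, Rl.Holds U T (rl (.zr c) (.zr c) (.zr c) (!c, s) v) :=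
    fun c s i => (h9 c s).1 i (mem_lst _)
  have p9 : ∀ c s v, Rl.Holds U T (rl (.ps c) (.ps c) (.ps c) (!c, s) v) :=
    fun c s i => (h9 c s).2 i (mem_lst _)
  have Zx : ∀ b, Has (.zr false) (G.grid n 0 b) := by
    intro b
    induction b with
    | zero => exact has_of (z7 _) _ hx2
    | succ b ih => rw [G.grid_up]; exact G.has_link (z7 _) (z9 false true) ih ih
  have Zy : ∀ a, Has (.zr true) (G.grid n a 0) := by
    intro a
    induction a with
    | zero => exact has_of (z7 _) _ hx3
    | succ b ih => rw [G.grid_right]; exact G.has_link (z7 _) (z9 true true) ih ih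
  have Px0 : ∀ a b, Has (.ps false) (G.grid n a b) ↔ Has (.ps false) (G.grid n a 0) := by
    intro a b
    induction b with
    | zero => rfl
    | succ b ih =>
      rw [← ih]
      constructor
      · intro h; rw [G.grid_down]; exact G.has_link (p7 _) (p9 false false) h h
      · intro h; rw [G.grid_up]; exact G.has_link (p7 _) (p9 false true) h h
  have Py0 : ∀ b a, Has (.ps true) (G.grid n a b) ↔ Has (.ps true) (G.grid n 0 b) := by
    intro b a
    induction a with
    | zero => rfl
    | succ a ih =>
      rw [← ih]
      constructor
      · intro h; rw [G.grid_left]; exact G.has_link (p7 _) (p9 true false) h h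
      · intro h; rw [G.grid_right]; exact G.has_link (p7 _) (p9 true true) h h
  have inv : ∀ c, Reaches I (l0, 0, 0) c → Used c.1 ∧ Has (.lab c.1) (G.grid n c.2.1 c.2.2) ∧
      (∀ a b, a + 1 ≤ c.2.1 → Has (.ps false) (G.grid n (a + 1) b)) ∧
      (∀ a b, b + 1 ≤ c.2.2 → Has (.ps true) (G.grid n a (b + 1))) := by
    intro c hr
    induction hr with
    | refl => exact ⟨hu0, has_of (hl _ hu0) _ hx4, by simp, by simp⟩
    | tail _ hs ih =>
      obtain ⟨u, hL, hP, hQ⟩ := ih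
      have u' := hu _ _ hs u
      refine ⟨u', ?_⟩
      have hI := hi _ u
      have h7' := hl _ u'
      cases hs with
      | incx e =>
        simp only [e, insR, List.forall_mem_append, List.forall_mem_map] at hI
        have k1 := G.has_link h7' (fun v => hI.1 v (mem_lst _)) hL hL
        have k2 := G.has_link (p7 _) (fun v => hI.2 v (mem_lst _)) hL hL
        rw [← G.grid_right] at k1 k2
        refine ⟨k1, fun a b hab => ?_, hQ⟩
        rcases Nat.lt_or_ge a (Nat.pred (_ + 1)) with h | h
        · exact hP a b h
        · have : a = _ := le_antisymm (Nat.succ_le_succ_iff.1 hab) h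
          subst this
          rw [Px0] at k2 ⊢
          exact k2
      | incy e =>
        simp only [e, insR, List.forall_mem_append, List.forall_mem_map] at hI
        have k1 := G.has_link h7' (fun v => hI.1 v (mem_lst _)) hL hL
        have k2 := G.has_link (p7 _) (fun v => hI.2 v (mem_lst _)) hL hL
        rw [← G.grid_up] at k1 k2
        refine ⟨k1, hP, fun a b hab => ?_⟩
        rcases Nat.lt_or_ge b (Nat.pred (_ + 1)) with h | h
        · exact hQ a b h
        · have : b = _ := le_antisymm (Nat.succ_le_succ_iff.1 hab) h
          subst this
          rw [Py0] at k2 ⊢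
          exact k2
      | decx0 e =>
        simp only [e, insR, List.forall_mem_append, List.forall_mem_map] at hI
        exact ⟨has_same (fun v => hI.1 v (mem_lst _)) hL (Zx _), hP, hQ⟩
      | decy0 e =>
        simp only [e, insR, List.forall_mem_append, List.forall_mem_map] at hI
        exact ⟨has_same (fun v => hI.1 v (mem_lst _)) hL (Zy _), hP, hQ⟩
      | decx1 e =>
        simp only [e, insR, List.forall_mem_append, List.forall_mem_map] at hI
        have k1 := G.has_link h7' (fun v => hI.2 v (mem_lst _)) hL (hP _ _ le_rfl)
        rw [← G.grid_left] at k1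
        exact ⟨k1, fun a b hab => hP a b (le_trans hab (Nat.le_succ _)), hQ⟩
      | decy1 e =>
        simp only [e, insR, List.forall_mem_append, List.forall_mem_map] at hI
        have k1 := G.has_link h7' (fun v => hI.2 v (mem_lst _)) hL (hQ _ _ le_rfl)
        rw [← G.grid_down] at k1
        exact ⟨k1, hP, fun a b hab => hQ a b (le_trans hab (Nat.le_succ _))⟩
      | nop e =>
        simp only [e, insR, List.forall_mem_map] at hI
        exact ⟨has_same (fun v => hI v (mem_lst _)) hL hL, hP, hQ⟩
  obtain ⟨u, hL, -, -⟩ := inv c hr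
  have hI := hi _ u
  simp only [hc, insR, List.forall_mem_map] at hI
  have d : Port := (true, true)
  exact hI (_, d) (mem_lst _) _ (hL d) (hL d) (Nd.hk _ d) _ (Nd.ht _ d d) (Nd.hk _ d)

end rules

/-! ### The finite model -/

theorem rk_link : ∀ (v : Col) (d : Port), rk (v + dl d) (opp d) = rk v d := by decide
theorem rk_turn : ∀ (v : Col) (d d' : Port), rk v d' = rk v d + 1 →
    |(dl d' : ℤ × ℤ).1 - (dl d : ℤ × ℤ).1| ≤ 1 ∧ |(dl d' : ℤ × ℤ).2 - (dl d : ℤ × ℤ).2| ≤ 1 := by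
  decide
theorem rk_14 : ∀ (v : Col) (d d' : Port), rk v d = 1 → rk v d' = 4 → d.1 = false ∧ d'.1 = true := by
  decide

section model
variable (N : ℕ) (h4 : 4 ∣ N)

abbrev El := (ZMod N × ZMod N) × Port

variable {N}

def el_col (p : ZMod N × ZMod N) : Col := (ZMod.castHom h4 (ZMod 4) p.1, ZMod.castHom h4 (ZMod 4) p.2)

def elT0 (x y : El N) : Prop := ∃ D : ℤ × ℤ, y.1 = x.1 + ((D.1 : ZMod N), (D.2 : ZMod N)) ∧
  |2 * D.1 + (dl y.2 : ℤ × ℤ).1 - (dl x.2 : ℤ × ℤ).1| ≤ (rk (el_col h4 y.1) y.2 : ℤ) - rk (el_col h4 x.1) x.2 ∧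
  |2 * D.2 + (dl y.2 : ℤ × ℤ).2 - (dl x.2 : ℤ × ℤ).2| ≤ (rk (el_col h4 y.1) y.2 : ℤ) - rk (el_col h4 x.1) x.2

theorem elT0_trans {x y z : El N} (h : elT0 h4 x y) (h' : elT0 h4 y z) : elT0 h4 x z := by
  obtain ⟨D, h1, h2, h3⟩ := h
  obtain ⟨E, h1', h2', h3'⟩ := h'
  refine ⟨(D.1 + E.1, D.2 + E.2), ?_, ?_, ?_⟩
  · rw [h1', h1]
    ext <;> simp <;> ring
  · rw [abs_le] at *
    constructor <;> simp only <;> linarith [h2.1, h2.2, h2'.1, h2'.2]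
  · rw [abs_le] at *
    constructor <;> simp only <;> linarith [h3.1, h3.2, h3'.1, h3'.2]

theorem el_col_dl (p : ZMod N × ZMod N) (d : Port) : el_col h4 (p + dl d) = el_col h4 p + dl d := by
  obtain ⟨c, s⟩ := d
  cases c <;> cases s <;> simp [el_col, dl, sg, Prod.ext_iff, -ZMod.castHom_apply]

theorem el_link {x : El N} : elT0 h4 x (x.1 + dl x.2, opp x.2) := by
  refine ⟨dl x.2, ?_, ?_, ?_⟩
  · obtain ⟨p, c, s⟩ := x
    cases c <;> cases s <;> simp [dl, sg]
  · simp only [el_col_dl, rk_link]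
    obtain ⟨p, c, s⟩ := x
    cases c <;> cases s <;> simp [dl, sg, opp]
  · simp only [el_col_dl, rk_link]
    obtain ⟨p, c, s⟩ := x
    cases c <;> cases s <;> simp [dl, sg, opp]

theorem el_link_unique {x y : El N} (h : elT0 h4 x y) (h2 : y.2 = opp x.2)
    (h3 : el_col h4 y.1 = el_col h4 x.1 + dl x.2) : y.1 = x.1 + dl x.2 := by
  obtain ⟨D, e1, e2, e3⟩ := h
  rw [e1]
  rw [h3, h2, rk_link, sub_self, abs_nonpos_iff] at e2 e3
  obtain ⟨D1, D2⟩ := D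
  obtain ⟨p, c, s⟩ := x
  cases c <;> cases s <;> simp [dl, sg, opp] at e2 e3 ⊢ <;> constructor <;> 
    first
    | (have : D1 = 0 := by omega
       simp [this])
    | (have : D1 = 1 := by omega
       simp [this])
    | (have : D1 = -1 := by omega
       simp [this])
    | (have : D2 = 0 := by omega
       simp [this])
    | (have : D2 = 1 := by omega
       simp [this])
    | (have : D2 = -1 := by omega
       simp [this])

theorem el_same {x y : El N} (h : elT0 h4 x y) (h2 : y.2 = x.2)
    (h3 : el_col h4 y.1 = el_col h4 x.1) : x = y := by
  obtain ⟨D, e1, e2, e3⟩ := h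
  rw [h3, h2, sub_self, abs_nonpos_iff] at e2 e3
  have d1 : D.1 = 0 := by omega
  have d2 : D.2 = 0 := by omega
  refine Prod.ext ?_ h2.symm
  rw [e1, d1, d2]
  ext <;> simp

theorem el_14 {x y : El N} (h : elT0 h4 x y) (h3 : el_col h4 y.1 = el_col h4 x.1)
    (h1 : rk (el_col h4 x.1) x.2 = 1) (h2 : rk (el_col h4 x.1) y.2 = 4) : x.1 = y.1 := by
  obtain ⟨D, e1, e2, e3⟩ := h
  obtain ⟨k1, k2⟩ := rk_14 _ _ _ h1 h2
  rw [h3, h1, h2] at e2 e3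
  obtain ⟨D1, D2⟩ := D
  rw [e1] at h3
  simp only [el_col, Prod.fst_add, Prod.snd_add, map_add, map_intCast, Prod.mk.injEq, add_eq_left] at h3
  obtain ⟨q1, q2⟩ := h3
  have q1 := (ZMod.intCast_zmod_eq_zero_iff_dvd D1 4).1 q1
  have q2 := (ZMod.intCast_zmod_eq_zero_iff_dvd D2 4).1 q2
  have b1 : D1 = 0 := by
    obtain ⟨p, c, s⟩ := x
    obtain ⟨p', c', s'⟩ := y
    simp only at k1 k2
    subst k1 k2
    cases s <;> cases s' <;> simp [dl, sg, abs_le] at e2 e3 <;> omega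
  have b2 : D2 = 0 := by
    obtain ⟨p, c, s⟩ := x
    obtain ⟨p', c', s'⟩ := y
    simp only at k1 k2
    subst k1 k2
    cases s <;> cases s' <;> simp [dl, sg, abs_le] at e2 e3 <;> omega
  rw [e1, b1, b2]
  ext <;> simp

variable {Λ : Type}

def elU (I : Λ → Instr Λ) (l0 : Λ) : Pd Λ → El N → Prop
  | .kd v d, x => el_col h4 x.1 = v ∧ x.2 = d
  | .zr c, x => (if c then x.1.2 else x.1.1) = 0
  | .ps c, x => (if c then x.1.2 else x.1.1) ≠ 0
  | .lab l, x => ∃ a b : ℕ, Reaches I (l0, 0, 0) (l, a, b) ∧ x.1 = ((a : ZMod N), (b : ZMod N))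

def elT : Fin 2 → El N → El N → Prop := fun k x y => if k = 0 then elT0 h4 x y else x.1 = y.1

theorem elT_zero (x y : El N) : elT h4 0 x y ↔ elT0 h4 x y := by simp [elT]
theorem elT_one (x y : El N) : elT h4 1 x y ↔ x.1 = y.1 := by simp [elT]

theorem el_r7 (I : Λ → Instr Λ) (l0 : Λ) (p : Pd Λ) (hp : ∀ x y : El N, x.1 = y.1 → elU h4 I l0 p x → elU h4 I l0 p y) (i) :
    Rl.Holds (elU h4 I l0) (elT h4) (r7 p i) := by
  intro x h1 _ _ y h3 _
  rw [elT_one] at h3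
  exact hp x y h3 h1

theorem el_rl (I : Λ → Instr Λ) (l0 : Λ) (p p' q : Pd Λ) (d v)
    (hp : ∀ x y : El N, x.2 = d → y.1 = x.1 + dl d → elU h4 I l0 p x → elU h4 I l0 p' x → elU h4 I l0 q y) :
    Rl.Holds (elU h4 I l0) (elT h4) (rl p p' q d v) := by
  intro x h1 h2 h3 y h4' h5
  rw [elT_zero] at h4'
  obtain ⟨k1, k2⟩ := h3
  obtain ⟨k3, k4⟩ := h5
  subst k1 k2
  exact hp x y rfl (el_link_unique h4 h4' k4 k3) h1 h2

theorem el_rs (I : Λ → Instr Λ) (l0 : Λ) (p p' q : Pd Λ) (i)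
    (hp : ∀ x y : El N, x.1 = y.1 → elU h4 I l0 p x → elU h4 I l0 p' x → elU h4 I l0 q y) :
    Rl.Holds (elU h4 I l0) (elT h4) (rs p p' (.pr q) i) := by
  intro x h1 h2 h3 y h4' h5
  rw [elT_one] at h4'
  exact hp x y h4' h1 h2

theorem el_spec (I : Λ → Instr Λ) (l0 : Λ)
    (hB : ∀ c, Reaches I (l0, 0, 0) c → c.2.1 < N ∧ c.2.2 < N ∧ I c.1 ≠ .rej) :
    Spec I (fun _ => True) l0 (elU h4 I l0) (elT h4) := by
  have hz : ∀ a : ℕ, a < N → ((a : ZMod N) = 0 ↔ a = 0) := by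
    intro a ha
    rw [ZMod.natCast_eq_zero_iff]
    exact ⟨fun h => Nat.eq_zero_of_dvd_of_lt h ha, by rintro rfl; simp⟩
  have g1 : ∀ i, Rl.Holds (elU h4 I l0) (elT h4) (r1 i) := by
    rintro ⟨v, d, d'⟩ x ⟨h1, h2⟩
    exact ⟨(x.1, d'), (elT_one _ _ _).2 rfl, h1, rfl⟩
  refine ⟨?_, ⟨(0, (false, true)), ⟨?_, rfl⟩, by simp [elU], by simp [elU], 0, 0, .refl, by simp; rfl⟩, ?_⟩
  · simp only [geo, List.forall_mem_append, List.forall_mem_map, List.forall_mem_flatMap]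
    refine ⟨⟨⟨⟨⟨⟨?_, ?_⟩, ?_⟩, ?_⟩, ?_⟩, ?_⟩, ?_⟩
    · exact fun i _ => g1 i
    · rintro ⟨v, d⟩ - x ⟨h1, h2⟩ - - y h3 ⟨h4', h5⟩
      rw [elT_one] at h3
      exact Prod.ext h3 (h2.trans h5.symm)
    · rintro ⟨v, d⟩ - x ⟨h1, h2⟩
      simp only at h1 h2
      refine ⟨(x.1 + dl x.2, opp x.2), (elT_zero _ _ _).2 (el_link h4), ?_, ?_⟩
      · rw [el_col_dl, h1, h2]
      · rw [h2]
    · rintro ⟨v, d⟩ - x ⟨h1, h2⟩ - - y h3 ⟨h4', h5⟩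
      rw [elT_zero] at h3
      exact el_same h4 h3 (h5.trans h2.symm) (h4'.trans h1.symm)
    · rintro ⟨v, d, d'⟩ -
      rw [r5]
      split_ifs with hr
      · rintro x ⟨h1, h2⟩ - - y h3 ⟨h4', h5⟩
        simp only at h1 h2 h4' h5
        rw [elT_one] at h3
        refine (elT_zero _ _ _).2 ⟨0, ?_, ?_, ?_⟩
        · rw [h3]; ext <;> simp
        · have := (rk_turn _ _ _ hr).1
          simp only at hr this
          rw [h4', h1, h2, h5, hr]
          simpa using this
        · have := (rk_turn _ _ _ hr).2
          simp only at hr this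
          rw [h4', h1, h2, h5, hr]
          simpa using this
      · exact g1 _
    · rintro ⟨v, d, d'⟩ -
      rw [r6]
      split_ifs with hr
      · rintro x ⟨h1, h2⟩ - - y h3 ⟨h4', h5⟩
        simp only at h1 h2 h4' h5 hr
        rw [elT_zero] at h3
        refine (elT_one _ _ _).2 (el_14 h4 h3 (h4'.trans h1.symm) ?_ ?_)
        · rw [h1, h2]; exact hr.1
        · rw [h1, h5]; exact hr.2
      · exact g1 _
    · intro c _
      refine ⟨⟨fun i _ => el_r7 h4 I l0 _ ?_ i, fun i _ => el_r7 h4 I l0 _ ?_ i⟩, fun s _ => 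
        ⟨fun i _ => el_rl h4 I l0 _ _ _ _ _ ?_, fun i _ => el_rl h4 I l0 _ _ _ _ _ ?_⟩⟩
      · intro x y h; simp [elU, h]
      · intro x y h; simp [elU, h]
      · intro x y h h' h1 _
        cases c <;> simpa [elU, h', dl] using h1
      · intro x y h h' h1 _
        cases c <;> simpa [elU, h', dl] using h1
  · simp [el_col]
  · intro l _
    simp only [labR, List.forall_mem_append, List.forall_mem_map]
    refine ⟨fun i _ => el_r7 h4 I l0 _ ?_ i, ?_⟩
    · intro x y h; simp [elU, h]
    · cases e : I l with
      | inc c l' =>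
        simp only [insR, List.forall_mem_append, List.forall_mem_map]
        have : ∀ x y : El N, y.1 = x.1 + dl (c, true) → elU h4 I l0 (.lab l) x → 
            elU h4 I l0 (.lab l') y ∧ elU h4 I l0 (.ps c) y := by
          rintro x y h ⟨a, b, h1, h2⟩
          cases c
          · have h3 := h1.tail (.incx e)
            refine ⟨⟨a + 1, b, h3, ?_⟩, ?_⟩
            · rw [h, h2]; simp [dl, sg]
            · have := hz (a + 1) (hB _ h3).1
              simp [elU, h, h2, dl, sg]
              simpa using this
          · have h3 := h1.tail (.incy e)
            refine ⟨⟨a, b + 1, h3, ?_⟩, ?_⟩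
            · rw [h, h2]; simp [dl, sg]
            · have := hz (b + 1) (hB _ h3).2.1
              simp [elU, h, h2, dl, sg]
              simpa using this
        exact ⟨fun i _ => el_rl h4 I l0 _ _ _ _ _ fun x y _ h h1 _ => (this x y h h1).1,
          fun i _ => el_rl h4 I l0 _ _ _ _ _ fun x y _ h h1 _ => (this x y h h1).2⟩
      | dec c l0' l1 =>
        simp only [insR, List.forall_mem_append, List.forall_mem_map]
        refine ⟨fun i _ => el_rs h4 I l0 _ _ _ _ ?_, fun i _ => el_rl h4 I l0 _ _ _ _ _ ?_⟩
        · rintro x y h ⟨a, b, h1, h2⟩ h3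
          cases c
          · simp only [elU, h2, Bool.false_eq_true, if_false] at h3
            have := (hz a (hB _ h1).1).1 h3
            subst this
            exact ⟨0, b, h1.tail (.decx0 e), by rw [← h, h2]⟩
          · simp only [elU, h2, if_true] at h3
            have := (hz b (hB _ h1).2.1).1 h3
            subst this
            exact ⟨a, 0, h1.tail (.decy0 e), by rw [← h, h2]⟩
        · rintro x y _ h ⟨a, b, h1, h2⟩ h3
          cases c
          · simp only [elU, h2, Bool.false_eq_true, if_false] at h3
            obtain ⟨a', rfl⟩ : ∃ a', a = a' + 1 := 
              Nat.exists_eq_succ_of_ne_zero (fun h0 => h3 (by rw [h0]; simp))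
            exact ⟨a', b, h1.tail (.decx1 e), by rw [h, h2]; simp [dl, sg]⟩
          · simp only [elU, h2, if_true] at h3
            obtain ⟨a', rfl⟩ : ∃ a', b = a' + 1 := 
              Nat.exists_eq_succ_of_ne_zero (fun h0 => h3 (by rw [h0]; simp))
            exact ⟨a, a', h1.tail (.decy1 e), by rw [h, h2]; simp [dl, sg]⟩
      | nop l' =>
        simp only [insR, List.forall_mem_map]
        refine fun i _ => el_rs h4 I l0 _ _ _ _ ?_
        rintro x y h ⟨a, b, h1, h2⟩ _
        exact ⟨a, b, h1.tail (.nop e), by rw [← h, h2]⟩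
      | acc => simp [insR]
      | rej =>
        simp only [insR, List.forall_mem_map]
        rintro i _ x ⟨a, b, h1, h2⟩
        exact absurd e (hB _ h1).2.2

end model

theorem exists_model {Λ : Type} (I : Λ → Instr Λ) (l0 : Λ) {c} (h : Reaches I (l0, 0, 0) c)
    (hc : I c.1 = .acc) : ∃ (A : Type) (_ : Nonempty A) (_ : Finite A) (U : Pd Λ → A → Prop)
      (T : Fin 2 → A → A → Prop), Transitive (T 0) ∧ Equivalence (T 1) ∧
      Spec I (fun _ => True) l0 U T := by
  obtain ⟨B, hB⟩ := bounded_of_acc h hc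
  have h4 : 4 ∣ 4 * (B + 1) := ⟨_, rfl⟩
  have : NeZero (4 * (B + 1)) := ⟨by omega⟩
  refine ⟨El (4 * (B + 1)), inferInstance, inferInstance, elU h4 I l0, elT h4, ?_, ?_, el_spec h4 I l0 ?_⟩
  · intro x y z; simp only [elT_zero]; exact elT0_trans h4
  · constructor
    · intro x; rw [elT_one]
    · intro x y; simp only [elT_one]; exact Eq.symm
    · intro x y z; simp only [elT_one]; exact Eq.trans
  · intro c hc; have := hB c hc; exact ⟨by omega, by omega, this.2.2⟩

/-! ### Formulas -/

def pa (p : ℕ) : F 1 := .patom p (by omega) (by omega)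
def pb (p : ℕ) : F 2 := .patom p (by omega) (by omega)

def Cn.toF {P : Type} (cd : P → ℕ) : Cn P → F 2
  | .eq => .eqatom
  | .rel k => .batom k
  | .pr p => pb (cd p)
  | .fls => .fls (by omega)

def Rl.toF {P : Type} (cd : P → ℕ) : Rl P → F 0
  | .E p k q => .all (by omega) (.imp (pa (cd p)) (.ex (by omega) (.and (.batom k) (pb (cd q)))))
  | .H p1 p2 p3 k q c => .all (by omega) (.imp (pa (cd p1)) (.imp (pa (cd p2)) (.imp (pa (cd p3))
      (.all (by omega) (.imp (.batom k) (.imp (pb (cd q)) (c.toF cd)))))))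
  | .S p1 p2 p3 p4 => .ex (by omega) (.and (pa (cd p1)) (.and (pa (cd p2))
      (.and (pa (cd p3)) (pa (cd p4)))))

theorem Cn.sat {P A : Type} (cd : P → ℕ) (M : Str A) (c : Cn P) (v : Fin 2 → A) :
    Sat M (c.toF cd) v ↔ c.Holds (fun p => M.U (cd p)) M.T (v 0) (v 1) := by
  cases c <;> rfl

theorem snoc1 {A : Type} (v : Fin 0 → A) (a : A) : (Fin.snoc v a : Fin 1 → A) 0 = a := rfl
theorem snoc2 {A : Type} (v : Fin 1 → A) (a : A) : (Fin.snoc v a : Fin 2 → A) 0 = v 0 := rfl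
theorem snoc3 {A : Type} (v : Fin 1 → A) (a : A) : (Fin.snoc v a : Fin 2 → A) 1 = a := rfl

theorem Rl.sat {P A : Type} (cd : P → ℕ) (M : Str A) (r : Rl P) (v : Fin 0 → A) :
    Sat M (r.toF cd) v ↔ r.Holds (fun p => M.U (cd p)) M.T := by
  cases r with
  | E p k q => rfl
  | H p1 p2 p3 k q c =>
    simp only [Rl.toF, Sat, Cn.sat, snoc2, snoc3, snoc1]
    rfl
  | S p1 p2 p3 p4 => rfl

theorem Cn.guarded {P : Type} (cd : P → ℕ) (c : Cn P) : Guarded (c.toF cd) := by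
  cases c
  · exact .eqatom
  · exact .batom _
  · exact .patom _ _ _
  · exact .fls _

theorem Rl.guarded {P : Type} (cd : P → ℕ) (r : Rl P) : Guarded (r.toF cd) := by
  cases r with
  | E p k q =>
    exact .all0 ⟨_, _, _, rfl⟩ (.ex1 (.inr (.inl ⟨_, rfl⟩)) (.patom _ _ _) fun _ => .inl ⟨_, rfl⟩)
  | H p1 p2 p3 k q c =>
    exact .all0 ⟨_, _, _, rfl⟩ (.imp (.patom _ _ _) (.imp (.patom _ _ _)
      (.all1 (.inr (.inl ⟨_, rfl⟩)) (.imp (.patom _ _ _) (c.guarded cd)) fun _ => .inl ⟨_, rfl⟩)))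
  | S p1 p2 p3 p4 =>
    exact .ex0 ⟨_, _, _, rfl⟩ (.and (.patom _ _ _) (.and (.patom _ _ _) (.patom _ _ _)))

def conj {P : Type} (cd : P → ℕ) (l : List (Rl P)) (φ : F 0) : F 0 :=
  l.foldr (fun r ψ => .and (r.toF cd) ψ) φ

theorem conj_sat {P A : Type} (cd : P → ℕ) (M : Str A) (l : List (Rl P)) (φ : F 0) (v : Fin 0 → A) :
    Sat M (conj cd l φ) v ↔ (∀ r ∈ l, r.Holds (fun p => M.U (cd p)) M.T) ∧ Sat M φ v := by
  induction l with
  | nil => simp [conj]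
  | cons r l ih =>
    have : Sat M (conj cd (r :: l) φ) v ↔ Sat M (r.toF cd) v ∧ Sat M (conj cd l φ) v := by
      simp only [conj, List.foldr_cons, Sat]
    rw [this, ih, Rl.sat, List.forall_mem_cons, and_assoc]

theorem conj_guarded {P : Type} (cd : P → ℕ) (l : List (Rl P)) (φ : F 0) (h : Guarded φ) :
    Guarded (conj cd l φ) := by
  induction l with
  | nil => exact h
  | cons r l ih => exact .and (r.guarded cd) ih

def enf {P : Type} (cd : P → ℕ) (l : List (Rl P)) (e : ℕ) : ℕ :=
  l.foldr (fun r e => Nat.pair 5 (Nat.pair (encode (r.toF cd)) e)) e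

theorem conj_encode {P : Type} (cd : P → ℕ) (l : List (Rl P)) (φ : F 0) :
    encode (conj cd l φ) = enf cd l (encode φ) := by
  induction l with
  | nil => rfl
  | cons r l ih =>
    have : encode (conj cd (r :: l) φ) = Nat.pair 5 (Nat.pair (encode (r.toF cd)) (encode (conj cd l φ))) := by
      simp only [conj, List.foldr_cons, encode]
    rw [this, ih]; rfl

/-- primitive recursive list of rules -/
def PL {P : Type} (cd : P → ℕ) (l : ℕ → List (Rl P)) : Prop :=
  Primrec₂ fun t e => enf cd (l t) e

theorem PL.append {P : Type} {cd : P → ℕ} {l l' : ℕ → List (Rl P)} (h : PL cd l) (h' : PL cd l') :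
    PL cd (fun t => l t ++ l' t) := by
  have : ∀ t e, enf cd (l t ++ l' t) e = enf cd (l t) (enf cd (l' t) e) := by
    intro t e; simp [enf]
  simp only [PL, this]
  exact h.comp Primrec.fst h'

theorem PL.map {P α : Type} {cd : P → ℕ} (L : List α) (f : ℕ → α → Rl P)
    (h : ∀ a, Primrec fun t => encode ((f t a).toF cd)) : PL cd (fun t => L.map (f t)) := by
  induction L with
  | nil => exact Primrec.snd
  | cons a L ih =>
    have : ∀ t e, enf cd ((a :: L).map (f t)) e =
      Nat.pair 5 (Nat.pair (encode ((f t a).toF cd)) (enf cd (L.map (f t)) e)) := fun t e => rfl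
    simp only [PL, this]
    exact Primrec₂.natPair.comp (Primrec.const 5) (Primrec₂.natPair.comp ((h a).comp Primrec.fst) ih)

theorem prim_H {P : Type} (cd : P → ℕ) (p1 p2 p3 : ℕ → P) (k : Fin 2) (q r : ℕ → P)
    (h1 : Primrec fun t => cd (p1 t)) (h2 : Primrec fun t => cd (p2 t))
    (h3 : Primrec fun t => cd (p3 t)) (h4 : Primrec fun t => cd (q t))
    (h5 : Primrec fun t => cd (r t)) :
    Primrec fun t => encode ((Rl.H (p1 t) (p2 t) (p3 t) k (q t) (.pr (r t))).toF cd) := by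
  have pp : ∀ {f g : ℕ → ℕ}, Primrec f → Primrec g → Primrec fun t => Nat.pair (f t) (g t) :=
    fun hf hg => Primrec₂.natPair.comp hf hg
  have cc : ∀ n : ℕ, Primrec fun _ : ℕ => n := fun n => Primrec.const n
  simp only [Rl.toF, Cn.toF, encode, pa, pb]
  exact pp (cc _) (pp (cc _) (pp (pp (cc _) h1) (pp (cc _) (pp (pp (cc _) h2) (pp (cc _) (pp (pp (cc _) h3)
    (pp (cc _) (pp (cc _) (pp (cc _) (pp (cc _) (pp (pp (cc _) h4) (pp (cc _) h5))))))))))))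

section phi
variable (B : Block)

/-- the machine with initialisation -/
def mI (h : ℕ) : ℕ ⊕ B.L → Instr (ℕ ⊕ B.L)
  | .inl t => if t < h then .inc false (.inl (t + 1)) else if t = h then .nop (.inr B.start) else .acc
  | .inr l => (B.I l).map .inr

theorem mI_reach (h : ℕ) {c} (hr : Reaches B.I (B.start, h, 0) c) :
    Reaches (mI B h) (.inl 0, 0, 0) (.inr c.1, c.2) := by
  have h1 : ∀ t ≤ h, Reaches (mI B h) (.inl 0, 0, 0) (.inl t, t, 0) := by
    intro t
    induction t with
    | zero => intro _; exact .refl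
    | succ t ih =>
      intro ht
      exact (ih (by omega)).tail (.incx (by simp only [mI]; rw [if_pos (by omega)]))
  refine ((h1 h le_rfl).tail (.nop (by simp [mI]; rfl))).trans ?_
  exact hr.map Sum.inr fun l => .inr rfl

def Used (h : ℕ) : ℕ ⊕ B.L → Prop
  | .inl t => t ≤ h
  | .inr _ => True

theorem used_step (h : ℕ) (a b) (hs : Step (mI B h) a b) (hu : Used B h a.1) : Used B h b.1 := by
  have key : ∀ l, (∀ c l', mI B h l = .inc c l' → Used B h l') ∧
      (∀ c l0 l1, mI B h l = .dec c l0 l1 → Used B h l0 ∧ Used B h l1) ∧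
      (∀ l', mI B h l = .nop l' → Used B h l') := by
    rintro (t | l)
    · simp only [mI]
      split_ifs with h1 h2
      · refine ⟨?_, by simp, by simp⟩
        rintro c l' ⟨⟩; exact h1
      · refine ⟨by simp, by simp, ?_⟩
        rintro l' ⟨⟩; trivial
      · simp
    · simp only [mI]
      cases B.I l <;> simp only [Instr.map]
      · refine ⟨?_, by simp, by simp⟩
        rintro c l' ⟨⟩; trivial
      · refine ⟨by simp, ?_, by simp⟩
        rintro c l' l'' ⟨⟩; exact ⟨trivial, trivial⟩
      · refine ⟨by simp, by simp, ?_⟩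
        rintro l' ⟨⟩; trivial
      · simp
      · simp
  cases hs with
  | incx e => exact (key _).1 _ _ e
  | incy e => exact (key _).1 _ _ e
  | decx0 e => exact ((key _).2.1 _ _ _ e).1
  | decx1 e => exact ((key _).2.1 _ _ _ e).2
  | decy0 e => exact ((key _).2.1 _ _ _ e).1
  | decy1 e => exact ((key _).2.1 _ _ _ e).2
  | nop e => exact (key _).2.2 _ e

theorem exists_code : ∃ cd : Pd (ℕ ⊕ B.L) → ℕ, Function.Injective cd ∧ ∀ t, cd (.lab (.inl t)) = 2 * t := by
  have := B.fin
  obtain ⟨f, hf⟩ := exists_injective_nat ((Col × Port) ⊕ (Bool ⊕ (Bool ⊕ B.L)))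
  refine ⟨fun
    | .kd v d => 2 * f (.inl (v, d)) + 1
    | .zr c => 2 * f (.inr (.inl c)) + 1
    | .ps c => 2 * f (.inr (.inr (.inl c))) + 1
    | .lab (.inl t) => 2 * t
    | .lab (.inr l) => 2 * f (.inr (.inr (.inr l))) + 1, ?_, fun t => rfl⟩
  have key : ∀ a b, 2 * f a + 1 = 2 * f b + 1 → a = b := fun a b h => hf (by omega)
  rintro (⟨v, d⟩ | c | c | (t | l)) (⟨v', d'⟩ | c' | c' | (t' | l')) h <;> simp only at h <;>
    first
    | (exfalso; omega)
    | (have := key _ _ h; simp at this; done)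
    | (have := key _ _ h; simp at this; simp [this])
    | (have : t = t' := by omega
       rw [this])

/-- the rules for the finite part -/
noncomputable def baseR : List (Rl (Pd (ℕ ⊕ B.L))) :=
  have := B.fin
  have := Fintype.ofFinite B.L
  geo ++ [seed (.inl 0)] ++ (lst B.L).flatMap fun l => labR (.inr l) ((B.I l).map .inr)

variable (cd : Pd (ℕ ⊕ B.L) → ℕ)

noncomputable def chain (h : ℕ) : F 0 :=
  Nat.rec (conj cd (baseR B) (.imp (.fls (by omega)) (.fls (by omega))))
    (fun t φ => conj cd (labR (.inl t) (.inc false (.inl (t + 1)))) φ) h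

noncomputable def phi (h : ℕ) : F 0 := conj cd (labR (.inl h) (.nop (.inr B.start))) (chain B cd h)

theorem phi_guarded (h : ℕ) : Guarded (phi B cd h) := by
  refine conj_guarded _ _ _ ?_
  induction h with
  | zero => exact conj_guarded _ _ _ (.imp (.fls _) (.fls _))
  | succ h ih => exact conj_guarded _ _ _ ih

theorem phi_sat {A : Type} (M : Str A) (h : ℕ) (v : Fin 0 → A) : Sat M (phi B cd h) v ↔
    Spec (mI B h) (Used B h) (.inl 0) (fun p => M.U (cd p)) M.T := by
  have hc : ∀ k, Sat M (chain B cd k) v ↔ (∀ r ∈ baseR B, r.Holds (fun p => M.U (cd p)) M.T) ∧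
      ∀ t < k, ∀ r ∈ labR (.inl t) (.inc false (.inl (t + 1))), r.Holds (fun p => M.U (cd p)) M.T := by
    intro k
    induction k with
    | zero =>
      have : chain B cd 0 = conj cd (baseR B) (.imp (.fls (by omega)) (.fls (by omega))) := rfl
      rw [this, conj_sat]
      simp [Sat]
    | succ k ih =>
      have : chain B cd (k + 1) = conj cd (labR (.inl k) (.inc false (.inl (k + 1)))) (chain B cd k) := rfl
      rw [this, conj_sat, ih]
      constructor
      · rintro ⟨h1, h2, h3⟩
        refine ⟨h2, fun t ht => ?_⟩
        rcases Nat.lt_succ_iff_lt_or_eq.1 ht with h | rfl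
        · exact h3 t h
        · exact h1
      · rintro ⟨h1, h2⟩
        exact ⟨h2 k (by omega), h1, fun t ht => h2 t (by omega)⟩
  rw [phi, conj_sat, hc]
  simp only [baseR, List.forall_mem_append, List.forall_mem_flatMap, List.forall_mem_singleton]
  constructor
  · rintro ⟨h1, ⟨⟨h2, h3⟩, h4⟩, h5⟩
    refine ⟨h2, h3, ?_⟩
    rintro (t | l) hl
    · rcases Nat.lt_or_eq_of_le hl with h | rfl
      · simp only [mI, if_pos h]; exact h5 t h
      · simp only [mI, lt_irrefl, if_true, if_false]; exact h1
    · exact h4 l (by convert mem_lst l)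
  · rintro ⟨h1, h2, h3⟩
    refine ⟨?_, ⟨⟨h1, h2⟩, fun l _ => h3 (.inr l) trivial⟩, fun t ht => ?_⟩
    · have := h3 (.inl h) (le_refl h)
      simpa only [mI, lt_irrefl, if_true, if_false] using this
    · have := h3 (.inl t) (le_of_lt ht)
      simpa only [mI, if_pos ht] using this

theorem phi_prim (hcd : ∀ t, cd (.lab (.inl t)) = 2 * t) : Primrec fun h => encode (phi B cd h) := by
  have c0 : ∀ p, Primrec fun _ : ℕ => cd p := fun p => Primrec.const _
  have c1 : Primrec fun t : ℕ => cd (.lab (.inl t)) := by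
    simp only [hcd]; exact Primrec.nat_mul.comp (Primrec.const 2) Primrec.id
  have c2 : Primrec fun t : ℕ => cd (.lab (.inl (t + 1))) := c1.comp Primrec.succ
  have a1 : PL cd fun t => (lst _).map (r7 (.lab (.inl t))) :=
    PL.map _ _ fun i => prim_H cd _ _ _ _ _ _ c1 c1 (c0 _) (c0 _) c1
  have a21 : PL cd fun t => (lst _).map (rl (.lab (.inl t)) (.lab (.inl t)) (.lab (.inl (t+1))) (false, true)) :=
    PL.map _ _ fun v => prim_H cd _ _ _ _ _ _ c1 c1 (c0 _) (c0 _) c2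
  have a22 : PL cd fun t => (lst _).map (rl (.lab (.inl t)) (.lab (.inl t)) (.ps false) (false, true)) :=
    PL.map _ _ fun v => prim_H cd _ _ _ _ _ _ c1 c1 (c0 _) (c0 _) (c0 _)
  have a2 : PL cd fun t => labR (.inl t) (.inc false (.inl (t + 1))) :=
    a1.append (a21.append a22)
  have a3 : PL cd fun t => labR (.inl t) (.nop (.inr B.start)) :=
    a1.append (PL.map _ _ fun i => prim_H cd _ _ _ _ _ _ c1 c1 (c0 _) (c0 _) (c0 _))
  have b : Primrec fun h => encode (chain B cd h) := by
    have : ∀ h, encode (chain B cd h) = Nat.rec (motive := fun _ => ℕ) (encode (chain B cd 0))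
        (fun t e => enf cd (labR (.inl t) (.inc false (.inl (t + 1)))) e) h := by
      intro h
      induction h with
      | zero => rfl
      | succ h ih => 
        have : chain B cd (h + 1) = conj cd (labR (.inl h) (.inc false (.inl (h + 1)))) (chain B cd h) := rfl
        rw [this, conj_encode, ih]
    exact (Primrec.nat_rec₁ _ a2).of_eq fun h => (this h).symm
  refine (Primrec₂.comp (f := fun t e => enf cd (labR (.inl t) (.nop (.inr B.start))) e) a3 Primrec.id b).of_eq
    fun h => ?_
  rw [phi, conj_encode]
  rfl

theorem phi_model (hcd : Function.Injective cd) (h : ℕ) {c} (hr : Reaches B.I (B.start, h, 0) c)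
    (hc : B.I c.1 = .acc) : FinitelySatisfiableTransEquiv (phi B cd h) := by
  obtain ⟨A, i1, i2, U, T, t0, t1, hs⟩ := exists_model (mI B h) (.inl 0) (mI_reach B h hr)
    (by simp [mI, hc, Instr.map])
  refine ⟨A, i1, i2, ⟨fun p a => ∃ π, cd π = p ∧ U π a, T⟩, t0, t1, (phi_sat B cd _ h _).2 ?_⟩
  have : (fun p => (fun p a => ∃ π, cd π = p ∧ U π a) (cd p)) = U := by
    funext p a
    apply propext
    constructor
    · rintro ⟨π, h1, h2⟩; rwa [← hcd h1]
    · intro h; exact ⟨p, rfl, h⟩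
  simp only at this
  simp only [this]
  exact ⟨hs.g, hs.s, fun l _ => hs.l l trivial⟩

theorem phi_no_model (h : ℕ) {c} (hr : Reaches B.I (B.start, h, 0) c)
    (hc : B.I c.1 = .rej) : ¬ Satisfiable (phi B cd h) := by
  rintro ⟨A, _, M, ht, hs⟩
  exact ((phi_sat B cd M h _).1 hs).no_model ht (Nat.zero_le h) (used_step B h) (mI_reach B h hr)
    (by simp [mI, hc, Instr.map])

end phi

theorem exists_family : ∃ φ : ℕ → F 0, (∀ n, Guarded (φ n)) ∧ (Primrec fun n => encode (φ n)) ∧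
    ∀ n, (0 ∈ (Denumerable.ofNat Nat.Partrec.Code n).eval n → FinitelySatisfiableTransEquiv (φ n)) ∧
      (1 ∈ (Denumerable.ofNat Nat.Partrec.Code n).eval n → ¬ Satisfiable (φ n)) := by
  have hu : Partrec fun n : ℕ => (Denumerable.ofNat Nat.Partrec.Code n).eval n :=
    Nat.Partrec.Code.eval_part.comp (Computable.ofNat _) Computable.id
  obtain ⟨P, hP⟩ := prog_of_partrec _ hu
  obtain ⟨B, hB⟩ := machine_of_prog P
  obtain ⟨cd, h1, h2⟩ := exists_code B
  refine ⟨fun n => phi B cd (2 ^ n), fun n => phi_guarded _ _ _, ?_, fun n => ⟨fun h => ?_, fun h => ?_⟩⟩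
  · refine (phi_prim B cd h2).comp ?_
    have : ∀ n, 2 ^ n = Nat.rec (motive := fun _ => ℕ) 1 (fun _ e => e * 2) n := by
      intro n
      induction n with
      | zero => rfl
      | succ n ih => rw [pow_succ, ih]
    have hm : Primrec₂ fun (_ e : ℕ) => e * 2 := Primrec.nat_mul.comp Primrec.snd (Primrec.const 2)
    exact (Primrec.nat_rec₁ 1 hm).of_eq fun n => (this n).symm
  · obtain ⟨s, hs, h1'⟩ := hP n _ h
    obtain ⟨c, hc, hc'⟩ := (hB n s hs).1 h1'
    rw [pr, Nat.nth_prime_zero_eq_two] at hc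
    exact phi_model B cd h1 _ hc hc'
  · obtain ⟨s, hs, h1'⟩ := hP n _ h
    obtain ⟨c, hc, hc'⟩ := (hB n s hs).2 h1'
    rw [pr, Nat.nth_prime_zero_eq_two] at hc
    exact phi_no_model B cd _ hc hc'

theorem undecidable_core (S : F 0 → Prop) (h1 : ∀ φ, FinitelySatisfiableTransEquiv φ → S φ)
    (h2 : ∀ φ, S φ → Satisfiable φ) :
    ¬ ∃ f : ℕ → Bool, Computable f ∧ ∀ φ : F 0, Guarded φ → (f (encode φ) = true ↔ S φ) := by
  rintro ⟨f, hf, hS⟩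
  obtain ⟨φ, hg, hp, hφ⟩ := exists_family
  have hc : Computable fun n : ℕ => bif f (encode (φ n)) then (1 : ℕ) else 0 :=
    Computable.cond (hf.comp hp.to_comp) (Computable.const 1) (Computable.const 0)
  obtain ⟨e, he⟩ := Nat.Partrec.Code.exists_code.1 (Partrec.nat_iff.1 hc.partrec)
  have hN := hφ (Encodable.encode e)
  rw [Denumerable.ofNat_encode, he] at hN
  have hS' := hS _ (hg (Encodable.encode e))
  cases hb : f (encode (φ (Encodable.encode e)))
  · have := hN.1 (by simp [hb])
    rw [hS'.2 (h1 _ this)] at hb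
    simp at hb
  · exact hN.2 (by simp [hb]) (h2 _ (hS'.1 hb))

theorem te_to_fin {φ : F 0} (h : FinitelySatisfiableTransEquiv φ) : FinitelySatisfiable φ := by
  obtain ⟨A, i1, i2, M, t0, t1, hs⟩ := h
  refine ⟨A, i1, i2, M, fun k => ?_, hs⟩
  fin_cases k
  · exact t0
  · exact fun _ _ _ => t1.trans

theorem te_to_sat {φ : F 0} (h : SatisfiableTransEquiv φ) : Satisfiable φ := by
  obtain ⟨A, i1, M, t0, t1, hs⟩ := h
  refine ⟨A, i1, M, fun k => ?_, hs⟩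
  fin_cases k
  · exact t0
  · exact fun _ _ _ => t1.trans

theorem fin_to_sat {φ : F 0} (h : FinitelySatisfiable φ) : Satisfiable φ := by
  obtain ⟨A, i1, i2, M, t, hs⟩ := h
  exact ⟨A, i1, M, t, hs⟩

theorem fte_to_te {φ : F 0} (h : FinitelySatisfiableTransEquiv φ) : SatisfiableTransEquiv φ := by
  obtain ⟨A, i1, i2, M, t, hs⟩ := h
  exact ⟨A, i1, M, t, hs⟩

/-- Corollary of Theorem 8.  The satisfiability and the finite
satisfiability problems for the intersection of the fluted fragment with equality and
the two-variable guarded fragment are undecidable in the presence of two distinguished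
transitive relations, and also in the presence of one distinguished transitive and one
distinguished equivalence relation. -/
theorem guarded_fluted_eq_undecidable :
    (¬ ∃ f : ℕ → Bool, Computable f ∧
      ∀ φ : F 0, Guarded φ → (f (encode φ) = true ↔ Satisfiable φ)) ∧
    (¬ ∃ f : ℕ → Bool, Computable f ∧
      ∀ φ : F 0, Guarded φ → (f (encode φ) = true ↔ FinitelySatisfiable φ)) ∧
    (¬ ∃ f : ℕ → Bool, Computable f ∧
      ∀ φ : F 0, Guarded φ → (f (encode φ) = true ↔ SatisfiableTransEquiv φ)) ∧
    (¬ ∃ f : ℕ → Bool, Computable f ∧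
      ∀ φ : F 0, Guarded φ → (f (encode φ) = true ↔ FinitelySatisfiableTransEquiv φ)) := by
  exact ⟨undecidable_core _ (fun _ h => fin_to_sat (te_to_fin h)) (fun _ h => h),
    undecidable_core _ (fun _ h => te_to_fin h) (fun _ h => fin_to_sat h),
    undecidable_core _ (fun _ h => fte_to_te h) (fun _ h => te_to_sat h),
    undecidable_core _ (fun _ h => h) (fun _ h => fin_to_sat (te_to_fin h))⟩

end FlutedTwoTransEq
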